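/- arXiv:1403.5335 — 2 statements merged into one kernel-verified Lean document; each statement's English description precedes it below -/
import Mathlib

section
/- Fix an integer k ≥ 2 and a constant C > 0. For every ε > 0 there is a constant C_ε such that for every integer N ≥ 1, the number of 6-tuples (n₁, …, n₆) of integers with N ≤ n_i ≤ 2N for all i, satisfying n₁ + n₂ + n₃ = n₄ + n₅ + n₆ and |n₁^k + n₂^k + n₃^k − n₄^k − n₅^k − n₆^k| ≤ C·N^{k-2}, is at most C_ε · N^{3+ε}. -/
open MeasureTheory Real

noncomputable section

namespace DC

open ComplexConjugate

/-- exponential sum over a finite set -/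
def F {Ω : Type} (χ : ℤ → Ω → ℂ) (S : Finset ℤ) (x : Ω) : ℂ := ∑ n ∈ S, χ n x

/-- sixth moment -/
def E {Ω : Type} [Fintype Ω] (χ : ℤ → Ω → ℂ) (S : Finset ℤ) : ℝ := ∑ x, ‖F χ S x‖ ^ 6

/-- bilinear moment -/
def B {Ω : Type} [Fintype Ω] (χ : ℤ → Ω → ℂ) (S T : Finset ℤ) : ℝ :=
  ∑ x, ‖F χ S x‖ ^ 2 * ‖F χ T x‖ ^ 4

def Diam (S : Finset ℤ) (r : ℝ) : Prop := ∀ a ∈ S, ∀ b ∈ S, (a : ℝ) - b ≤ r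

def pc (S : Finset ℤ) (l : ℝ) (i : ℤ) : Finset ℤ := S.filter (fun n : ℤ => ⌊(n : ℝ) / l⌋ = i)

def ix (S : Finset ℤ) (l : ℝ) : Finset ℤ := S.image (fun n : ℤ => ⌊(n : ℝ) / l⌋)

/-- the transversality property -/
def Trans {Ω : Type} [Fintype Ω] (χ : ℤ → Ω → ℂ) (I : Finset ℤ) (A : ℝ) : Prop :=
  ∀ T ⊆ I, ∀ r d : ℝ, 1 ≤ r → r < d → Diam T r → ∀ n₁ ∈ I, ∀ n₂ ∈ I,
    (∀ t ∈ T, d ≤ |(n₁ : ℝ) - t|) → (∀ t ∈ T, d ≤ |(n₂ : ℝ) - t|) →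
    ∀ m₁ ∈ T, ∀ m₂ ∈ T, ∀ m₃ ∈ T, ∀ m₄ ∈ T,
    ∑ x, χ n₁ x * conj (χ n₂ x) * (χ m₁ x * χ m₂ x * conj (χ m₃ x) * conj (χ m₄ x)) ≠ 0 →
    |(n₁ : ℝ) - n₂| ≤ A * r ^ 2 / d

lemma pc_subset (S : Finset ℤ) (l : ℝ) (i : ℤ) : pc S l i ⊆ S := Finset.filter_subset _ _

lemma pc_bound {S : Finset ℤ} {l : ℝ} (hl : 0 < l) {i n : ℤ} (h : n ∈ pc S l i) :
    i * l ≤ n ∧ (n : ℝ) < (i + 1) * l := by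
  have h := (Finset.mem_filter.mp h).2
  rw [Int.floor_eq_iff] at h
  rw [le_div_iff₀ hl, div_lt_iff₀ hl] at h
  exact h

lemma pc_diam (S : Finset ℤ) {l : ℝ} (hl : 0 < l) (i : ℤ) : Diam (pc S l i) l := by
  intro a ha b hb
  have := pc_bound hl ha
  have := pc_bound hl hb
  linarith

lemma Diam.mono {S : Finset ℤ} {r r' : ℝ} (h : Diam S r) (hr : r ≤ r') : Diam S r' :=
  fun a ha b hb => (h a ha b hb).trans hr

lemma ix_card {S : Finset ℤ} {l R : ℝ} (hl : 0 < l) (hR : 0 ≤ R) (hS : Diam S R) :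
    ((ix S l).card : ℝ) ≤ R / l + 2 := by
  rcases S.eq_empty_or_nonempty with rfl | hne
  · have : 0 ≤ R / l + 2 := by positivity
    simpa [ix] using this
  obtain ⟨m, hm, hmin⟩ := S.exists_min_image id hne
  have hsub : ix S l ⊆ Finset.Icc ⌊(m : ℝ) / l⌋ ⌊((m : ℝ) + R) / l⌋ := by
    intro i hi
    obtain ⟨n, hn, rfl⟩ := Finset.mem_image.mp hi
    rw [Finset.mem_Icc]
    have h1 : (m : ℝ) ≤ n := by exact_mod_cast hmin n hn
    have h2 := hS n hn m hm
    exact ⟨Int.floor_le_floor (by gcongr), Int.floor_le_floor (by gcongr; linarith)⟩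
  have h1 := Finset.card_le_card hsub
  rw [Int.card_Icc] at h1
  have h2 : ((ix S l).card : ℤ) ≤ ⌊((m : ℝ) + R) / l⌋ + 1 - ⌊(m : ℝ) / l⌋ := by
    have : ⌊(m : ℝ) / l⌋ ≤ ⌊((m : ℝ) + R) / l⌋ := Int.floor_le_floor (by gcongr; linarith)
    omega
  have h3 : ((ix S l).card : ℝ) ≤ ⌊((m : ℝ) + R) / l⌋ + 1 - ⌊(m : ℝ) / l⌋ := by exact_mod_cast h2
  have h4 := Int.floor_le (((m : ℝ) + R) / l)
  have h5 := Int.lt_floor_add_one ((m : ℝ) / l)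
  rw [add_div] at h4
  rw [add_div] at h3
  linarith

section
variable {Ω : Type} (χ : ℤ → Ω → ℂ)

lemma F_pc (S : Finset ℤ) (l : ℝ) (x : Ω) : F χ S x = ∑ i ∈ ix S l, F χ (pc S l i) x := by
  unfold F pc ix
  rw [Finset.sum_fiberwise_of_maps_to]
  intro n hn
  exact Finset.mem_image_of_mem _ hn

lemma norm_F_pc (S : Finset ℤ) (l : ℝ) (x : Ω) :
    ‖F χ S x‖ ≤ ∑ i ∈ ix S l, ‖F χ (pc S l i) x‖ := by
  rw [F_pc χ S l x]; exact norm_sum_le _ _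

variable [Fintype Ω]

lemma B_nonneg (S T : Finset ℤ) : 0 ≤ B χ S T := by unfold B; positivity
lemma E_nonneg (S : Finset ℤ) : 0 ≤ E χ S := by unfold E; positivity

lemma lin_zero (S : Finset ℤ) (h : Ω → ℂ) (H : ∀ n ∈ S, ∑ x, χ n x * h x = 0) :
    ∑ x, F χ S x * h x = 0 := by
  unfold F
  simp only [Finset.sum_mul]
  rw [Finset.sum_comm]
  exact Finset.sum_eq_zero H

lemma linc_zero (S : Finset ℤ) (h : Ω → ℂ) (H : ∀ n ∈ S, ∑ x, conj (χ n x) * h x = 0) :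
    ∑ x, conj (F χ S x) * h x = 0 := by
  unfold F
  simp only [map_sum, Finset.sum_mul]
  rw [Finset.sum_comm]
  exact Finset.sum_eq_zero H

lemma six_zero (S S' T : Finset ℤ)
    (H : ∀ n₁ ∈ S, ∀ n₂ ∈ S', ∀ m₁ ∈ T, ∀ m₂ ∈ T, ∀ m₃ ∈ T, ∀ m₄ ∈ T,
      ∑ x, χ n₁ x * conj (χ n₂ x) * (χ m₁ x * χ m₂ x * conj (χ m₃ x) * conj (χ m₄ x)) = 0) :
    ∑ x, F χ S x * conj (F χ S' x) *
      (F χ T x * F χ T x * conj (F χ T x) * conj (F χ T x)) = 0 := by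
  simp only [mul_assoc]
  apply lin_zero
  intro n₁ h₁
  simp only [mul_left_comm (χ n₁ _)]
  apply linc_zero
  intro n₂ h₂
  simp only [mul_left_comm (χ n₁ _) (F χ T _), mul_left_comm (conj (χ n₂ _)) (F χ T _)]
  apply lin_zero
  intro m₁ h₃
  simp only [mul_left_comm (χ n₁ _) (F χ T _), mul_left_comm (conj (χ n₂ _)) (F χ T _),
    mul_left_comm (χ m₁ _) (F χ T _)]
  apply lin_zero
  intro m₂ h₄
  simp only [mul_left_comm _ (conj (F χ T _))]
  apply linc_zero
  intro m₃ h₅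
  simp only [mul_comm _ (conj (F χ T _)), mul_left_comm _ (conj (F χ T _))]
  apply linc_zero
  intro m₄ h₆
  rw [← H n₁ h₁ n₂ h₂ m₁ h₃ m₂ h₄ m₃ h₅ m₄ h₆]
  exact Finset.sum_congr rfl fun x _ => by ring

lemma near_card (J : Finset ℤ) (i : ℤ) : (J.filter (fun j => |i - j| ≤ 1)).card ≤ 3 := by
  have : J.filter (fun j => |i - j| ≤ 1) ⊆ Finset.Icc (i - 1) (i + 1) := by
    intro j hj
    have := (Finset.mem_filter.mp hj).2
    rw [abs_le] at this
    rw [Finset.mem_Icc]; omega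
  refine (Finset.card_le_card this).trans ?_
  rw [Int.card_Icc]; omega

lemma decouple {I : Finset ℤ} {A : ℝ} (hT : Trans χ I A) {S T : Finset ℤ} (hS : S ⊆ I)
    (hTI : T ⊆ I) {r d l : ℝ} (hr : 1 ≤ r) (hrd : r < d) (hl : 0 < l) (hAl : A * r ^ 2 / d ≤ l)
    (hdT : Diam T r) (hsep : ∀ s ∈ S, ∀ t ∈ T, d ≤ |(s : ℝ) - t|) :
    B χ S T ≤ 3 * ∑ i ∈ ix S l, B χ (pc S l i) T := by
  classical
  set J := ix S l with hJ
  set c : ℤ → ℤ → ℂ := fun i j => ∑ x, F χ (pc S l i) x * conj (F χ (pc S l j) x) *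
      (F χ T x * F χ T x * conj (F χ T x) * conj (F χ T x)) with hc
  have hn4 : ∀ x, ((‖F χ T x‖ ^ 4 : ℝ) : ℂ) =
      F χ T x * F χ T x * conj (F χ T x) * conj (F χ T x) := by
    intro x
    have := Complex.mul_conj' (F χ T x)
    push_cast
    linear_combination (-(‖F χ T x‖:ℂ)^2 - F χ T x * conj (F χ T x)) * this
  have h1 : ((B χ S T : ℝ) : ℂ) = ∑ i ∈ J, ∑ j ∈ J, c i j := by
    have : ((B χ S T : ℝ) : ℂ) = ∑ x, ∑ i ∈ J, ∑ j ∈ J, F χ (pc S l i) x * conj (F χ (pc S l j) x) *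
      (F χ T x * F χ T x * conj (F χ T x) * conj (F χ T x)) := by
      unfold B
      rw [Complex.ofReal_sum]
      refine Finset.sum_congr rfl fun x _ => ?_
      rw [Complex.ofReal_mul, hn4, Complex.ofReal_pow, ← Complex.mul_conj']
      rw [F_pc χ S l x, map_sum, Finset.sum_mul_sum, Finset.sum_mul]
      refine Finset.sum_congr rfl fun i _ => ?_
      rw [Finset.sum_mul]
    rw [this, Finset.sum_comm]
    refine Finset.sum_congr rfl fun i _ => ?_
    rw [Finset.sum_comm]
  have h2 : ∀ i ∈ J, ∀ j ∈ J, ‖c i j‖ ≤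
      if |i - j| ≤ 1 then (B χ (pc S l i) T + B χ (pc S l j) T) / 2 else 0 := by
    intro i _ j _
    split_ifs with hij
    · refine (norm_sum_le _ _).trans ?_
      unfold B
      rw [← Finset.sum_add_distrib, Finset.sum_div]
      refine Finset.sum_le_sum fun x _ => ?_
      simp only [norm_mul, RCLike.norm_conj]
      have := mul_nonneg (pow_nonneg (norm_nonneg (F χ T x)) 4)
        (sq_nonneg (‖F χ (pc S l i) x‖ - ‖F χ (pc S l j) x‖))
      nlinarith
    · rw [norm_le_zero_iff]
      apply six_zero
      intro n₁ h₁ n₂ h₂ m₁ h₃ m₂ h₄ m₃ h₅ m₄ h₆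
      by_contra hne
      have h₁' := pc_subset _ _ _ h₁
      have h₂' := pc_subset _ _ _ h₂
      have := (hT T hTI r d hr hrd hdT n₁ (hS h₁') n₂ (hS h₂') (hsep n₁ h₁') (hsep n₂ h₂')
        m₁ h₃ m₂ h₄ m₃ h₅ m₄ h₆ hne).trans hAl
      have b1 := pc_bound hl h₁
      have b2 := pc_bound hl h₂
      rw [abs_le] at this
      apply hij
      have e1 : ((i - j : ℤ) : ℝ) * l < 2 * l := by push_cast; linarith
      have e2 : ((j - i : ℤ) : ℝ) * l < 2 * l := by push_cast; linarith
      have e1' : (i - j : ℤ) < 2 := by exact_mod_cast lt_of_mul_lt_mul_right e1 hl.le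
      have e2' : (j - i : ℤ) < 2 := by exact_mod_cast lt_of_mul_lt_mul_right e2 hl.le
      rw [abs_le]; omega
  have h3 : B χ S T ≤ ∑ i ∈ J, ∑ j ∈ J,
      if |i - j| ≤ 1 then (B χ (pc S l i) T + B χ (pc S l j) T) / 2 else 0 := by
    have : ‖((B χ S T : ℝ) : ℂ)‖ = B χ S T := by
      rw [Complex.norm_real, Real.norm_of_nonneg (B_nonneg χ S T)]
    rw [← this, h1]
    refine (norm_sum_le _ _).trans (Finset.sum_le_sum fun i hi => ?_)
    exact (norm_sum_le _ _).trans (Finset.sum_le_sum fun j hj => h2 i hi j hj)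
  have h4 : ∑ i ∈ J, ∑ j ∈ J, (if |i - j| ≤ 1 then B χ (pc S l i) T else 0) ≤
      3 * ∑ i ∈ J, B χ (pc S l i) T := by
    rw [Finset.mul_sum]
    refine Finset.sum_le_sum fun i _ => ?_
    rw [← Finset.sum_filter, Finset.sum_const, nsmul_eq_mul]
    have : ((J.filter (fun j => |i - j| ≤ 1)).card : ℝ) ≤ 3 := by exact_mod_cast near_card J i
    exact mul_le_mul_of_nonneg_right this (B_nonneg _ _ _)
  have h5 : ∑ i ∈ J, ∑ j ∈ J, (if |i - j| ≤ 1 then B χ (pc S l j) T else 0) =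
      ∑ i ∈ J, ∑ j ∈ J, (if |i - j| ≤ 1 then B χ (pc S l i) T else 0) := by
    rw [Finset.sum_comm]
    refine Finset.sum_congr rfl fun i _ => Finset.sum_congr rfl fun j _ => ?_
    rw [abs_sub_comm]
  have h6 : (∑ i ∈ J, ∑ j ∈ J,
      if |i - j| ≤ 1 then (B χ (pc S l i) T + B χ (pc S l j) T) / 2 else 0) =
      (∑ i ∈ J, ∑ j ∈ J, (if |i - j| ≤ 1 then B χ (pc S l i) T else 0)) / 2 +
      (∑ i ∈ J, ∑ j ∈ J, (if |i - j| ≤ 1 then B χ (pc S l j) T else 0)) / 2 := by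
    simp only [Finset.sum_div]
    rw [← Finset.sum_add_distrib]
    refine Finset.sum_congr rfl fun i _ => ?_
    rw [← Finset.sum_add_distrib]
    refine Finset.sum_congr rfl fun j _ => ?_
    split_ifs <;> ring
  rw [h6, h5] at h3
  linarith

lemma B_swap (S T : Finset ℤ) : B χ S T ^ 2 ≤ B χ T S * E χ T := by
  have := Finset.sum_mul_sq_le_sq_mul_sq Finset.univ
    (fun x => ‖F χ T x‖ * ‖F χ S x‖ ^ 2) (fun x => ‖F χ T x‖ ^ 3)
  have e1 : B χ S T = ∑ x, ‖F χ T x‖ * ‖F χ S x‖ ^ 2 * ‖F χ T x‖ ^ 3 :=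
    Finset.sum_congr rfl fun x _ => by ring
  have e2 : B χ T S = ∑ x, (‖F χ T x‖ * ‖F χ S x‖ ^ 2) ^ 2 :=
    Finset.sum_congr rfl fun x _ => by ring
  have e3 : E χ T = ∑ x, (‖F χ T x‖ ^ 3) ^ 2 :=
    Finset.sum_congr rfl fun x _ => by ring
  rw [e1, e2, e3]
  exact this

lemma B_triv (S T : Finset ℤ) : B χ S T ≤ E χ S + E χ T := by
  unfold B E
  rw [← Finset.sum_add_distrib]
  refine Finset.sum_le_sum fun x _ => ?_
  have hu := norm_nonneg (F χ S x)
  have hv := norm_nonneg (F χ T x)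
  set u := ‖F χ S x‖
  set v := ‖F χ T x‖
  rcases le_total u v with h | h
  · have : u ^ 2 * v ^ 4 ≤ v ^ 2 * v ^ 4 := by gcongr
    have : 0 ≤ u ^ 6 := by positivity
    nlinarith
  · have : u ^ 2 * v ^ 4 ≤ u ^ 2 * u ^ 4 := by gcongr
    have : 0 ≤ v ^ 6 := by positivity
    nlinarith
end

section
variable {Ω : Type} [Fintype Ω] (χ : ℤ → Ω → ℂ)

lemma iter {I : Finset ℤ} {A : ℝ} (hA : 1 ≤ A) (hT : Trans χ I A) {η C X D : ℝ} (hη : 0 < η)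
    (hC : 0 ≤ C)
    (hE : ∀ S ⊆ I, ∀ r, 1 ≤ r → r ≤ X → Diam S r → E χ S ≤ C * r ^ (3 + η))
    (hD : 0 < D) (hDX : D ≤ X) (m : ℕ) : ∀ Q : ℝ, 2 ≤ Q → Q ^ (2 ^ (m + 1)) ≤ D →
    ∀ S ⊆ I, ∀ T ⊆ I, Diam S (D / Q) → Diam T (D / Q ^ 2) →
    (∀ s ∈ S, ∀ t ∈ T, A * D ≤ |(s : ℝ) - t|) →
    B χ S T ≤ 81 * C * D ^ (3 + η) * (Q ^ (-η)) ^ m / Q ^ 3 := by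
  have hpow : ∀ q : ℝ, 0 < q → (D / q) ^ (3 + η) = D ^ (3 + η) * q ^ (-η) / q ^ 3 := by
    intro q hq
    rw [Real.div_rpow hD.le hq.le, Real.rpow_neg hq.le, Real.rpow_add hq]
    have : q ^ (3 : ℝ) = q ^ 3 := by exact_mod_cast Real.rpow_natCast q 3
    rw [this]
    field_simp
  have hsq : ∀ q : ℝ, 0 < q → (q ^ 2) ^ (-η) = (q ^ (-η)) ^ 2 := by
    intro q hq
    rw [← Real.rpow_natCast, ← Real.rpow_natCast, ← Real.rpow_mul hq.le, ← Real.rpow_mul hq.le,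
      mul_comm]
  have hW : 0 < D ^ (3 + η) := by positivity
  induction m with
  | zero =>
    intro Q hQ hQD S hS T hTI hdS hdT _
    have hQ0 : 0 < Q := by linarith
    have hz : 0 < Q ^ (-η) := by positivity
    have hz1 : Q ^ (-η) ≤ 1 := Real.rpow_le_one_of_one_le_of_nonpos (by linarith) (by linarith)
    have hQ2 : Q ^ 2 ≤ D := by simpa using hQD
    have hQQ : Q ≤ Q ^ 2 := by nlinarith
    have h1 : 1 ≤ D / Q := by rw [le_div_iff₀ hQ0]; linarith
    have h2 : D / Q ≤ X := (div_le_self hD.le (by linarith)).trans hDX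
    have h3 : D / Q ^ 2 ≤ D / Q := by gcongr
    have e1 := hE S hS _ h1 h2 hdS
    have e2 := hE T hTI _ h1 h2 (hdT.mono h3)
    rw [hpow Q hQ0] at e1 e2
    have e3 := B_triv χ S T
    have e4 : C * (D ^ (3 + η) * Q ^ (-η) / Q ^ 3) ≤ C * D ^ (3 + η) / Q ^ 3 := by
      rw [mul_div_assoc, mul_div_assoc]
      gcongr
      rw [mul_div_left_comm]
      exact mul_le_of_le_one_left (by positivity) hz1 |>.trans_eq (by ring)
    have e5 : 0 ≤ C * D ^ (3 + η) / Q ^ 3 := by positivity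
    rw [pow_zero, mul_one]
    have : 81 * C * D ^ (3 + η) / Q ^ 3 = 81 * (C * D ^ (3 + η) / Q ^ 3) := by ring
    rw [this]; linarith
  | succ m ih =>
    intro Q hQ hQD S hS T hTI hdS hdT hsep
    have hQ0 : 0 < Q := by linarith
    have hz : 0 < Q ^ (-η) := by positivity
    have hQ4 : Q ^ 4 ≤ D := by
      refine le_trans (pow_le_pow_right₀ (by linarith) ?_) hQD
      calc 4 = 2 ^ 2 := by norm_num
        _ ≤ 2 ^ (m + 1 + 1) := Nat.pow_le_pow_right (by norm_num) (by omega)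
    have hQ24 : Q ^ 2 ≤ Q ^ 4 := pow_le_pow_right₀ (by linarith) (by norm_num)
    have h1 : 1 ≤ D / Q ^ 2 := by rw [le_div_iff₀ (by positivity)]; linarith
    have h2 : D / Q ^ 2 ≤ X := (div_le_self hD.le (by nlinarith)).trans hDX
    have hrd : D / Q ^ 2 < A * D := by
      have : D / Q ^ 2 < D := div_lt_self hD (by nlinarith)
      nlinarith
    have hl : 0 < D / Q ^ 4 := by positivity
    have hdec := decouple χ hT hS hTI h1 hrd hl
      (by apply le_of_eq; field_simp) hdT hsep
    set z := Q ^ (-η) with hzdef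
    set W := D ^ (3 + η) with hWdef
    have hpiece : ∀ i ∈ ix S (D / Q ^ 4), B χ (pc S (D / Q ^ 4) i) T ≤
        9 * C * W * z ^ (m + 1) / Q ^ 6 := by
      intro i _
      have hB := ih (Q ^ 2) (by nlinarith) (by rw [← pow_mul, ← pow_succ']; exact hQD) T hTI
        (pc S (D / Q ^ 4) i) ((pc_subset _ _ _).trans hS) hdT
        (by rw [← pow_mul]; exact pc_diam S hl i)
        (fun t ht s hs => by rw [abs_sub_comm]; exact hsep s (pc_subset _ _ _ hs) t ht)
      have hET := hE T hTI _ h1 h2 hdT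
      rw [hpow _ (by positivity), hsq Q hQ0] at hET
      rw [hsq Q hQ0] at hB
      have hsw := B_swap χ (pc S (D / Q ^ 4) i) T
      have : B χ (pc S (D / Q ^ 4) i) T ^ 2 ≤ (9 * C * W * z ^ (m + 1) / Q ^ 6) ^ 2 := by
        refine hsw.trans ?_
        refine (mul_le_mul hB hET (E_nonneg _ _) (by positivity)).trans (le_of_eq ?_)
        rw [← hzdef]
        field_simp
        ring
      exact le_of_sq_le_sq this (by positivity)
    have hcard := ix_card hl (by positivity : 0 ≤ D / Q) hdS
    have hcard' : ((ix S (D / Q ^ 4)).card : ℝ) ≤ 3 * Q ^ 3 := by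
      have : D / Q / (D / Q ^ 4) = Q ^ 3 := by field_simp
      rw [this] at hcard
      have : (2:ℝ) ^ 3 ≤ Q ^ 3 := by gcongr
      linarith
    have hsum := Finset.sum_le_card_nsmul _ _ _ hpiece
    rw [nsmul_eq_mul] at hsum
    calc B χ S T ≤ _ := hdec
      _ ≤ 3 * ((3 * Q ^ 3) * (9 * C * W * z ^ (m + 1) / Q ^ 6)) := by
        gcongr
        refine hsum.trans ?_
        gcongr
      _ = _ := by field_simp; ring

lemma sum_pow_four (J : Finset ℤ) (v : ℤ → ℝ) :
    (∑ i ∈ J, v i) ^ 4 ≤ (J.card : ℝ) ^ 3 * ∑ i ∈ J, v i ^ 4 := by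
  have h1 := sq_sum_le_card_mul_sum_sq (s := J) (f := v)
  have h2 := sq_sum_le_card_mul_sum_sq (s := J) (f := fun i => v i ^ 2)
  calc (∑ i ∈ J, v i) ^ 4 = ((∑ i ∈ J, v i) ^ 2) ^ 2 := by ring
    _ ≤ (J.card * ∑ i ∈ J, v i ^ 2) ^ 2 := by gcongr
    _ = (J.card : ℝ) ^ 2 * (∑ i ∈ J, v i ^ 2) ^ 2 := by ring
    _ ≤ (J.card : ℝ) ^ 2 * (J.card * ∑ i ∈ J, (v i ^ 2) ^ 2) := by gcongr
    _ = _ := by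
      rw [← mul_assoc, ← pow_succ]
      congr 1
      exact Finset.sum_congr rfl fun i _ => by ring

lemma coarse (S T : Finset ℤ) (l l' β : ℝ) (hβ : 0 ≤ β)
    (h : ∀ i ∈ ix S l, ∀ j ∈ ix T l', B χ (pc S l i) (pc T l' j) ≤ β) :
    B χ S T ≤ ((ix S l).card : ℝ) ^ 2 * ((ix T l').card : ℝ) ^ 4 * β := by
  set a := ((ix S l).card : ℝ) with ha
  set b := ((ix T l').card : ℝ) with hb
  have ha0 : 0 ≤ a := by positivity
  have hb0 : 0 ≤ b := by positivity
  have h1 : B χ S T ≤ ∑ x, a * b ^ 3 * ∑ i ∈ ix S l, ∑ j ∈ ix T l',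
      ‖F χ (pc S l i) x‖ ^ 2 * ‖F χ (pc T l' j) x‖ ^ 4 := by
    unfold B
    refine Finset.sum_le_sum fun x _ => ?_
    have e1 : ‖F χ S x‖ ^ 2 ≤ a * ∑ i ∈ ix S l, ‖F χ (pc S l i) x‖ ^ 2 := by
      refine le_trans ?_ sq_sum_le_card_mul_sum_sq
      have := norm_F_pc χ S l x
      gcongr
    have e2 : ‖F χ T x‖ ^ 4 ≤ b ^ 3 * ∑ i ∈ ix T l', ‖F χ (pc T l' i) x‖ ^ 4 := by
      refine le_trans ?_ (sum_pow_four _ _)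
      have := norm_F_pc χ T l' x
      gcongr
    refine (mul_le_mul e1 e2 (by positivity) (by positivity)).trans (le_of_eq ?_)
    rw [← Finset.sum_mul_sum]; ring
  refine h1.trans ?_
  rw [← Finset.mul_sum, Finset.sum_comm]
  have h2 : ∀ i ∈ ix S l, ∑ x, ∑ j ∈ ix T l',
      ‖F χ (pc S l i) x‖ ^ 2 * ‖F χ (pc T l' j) x‖ ^ 4 ≤ b * β := by
    intro i hi
    rw [Finset.sum_comm]
    have := Finset.sum_le_card_nsmul _ _ _ (h i hi)
    rw [nsmul_eq_mul] at this
    exact this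
  have h3 := Finset.sum_le_card_nsmul _ _ _ h2
  rw [nsmul_eq_mul] at h3
  calc _ ≤ a * b ^ 3 * (a * (b * β)) := by gcongr
    _ = _ := by ring

lemma broad_narrow (J : Finset ℤ) (v : ℤ → ℝ) (hv : ∀ i, 0 ≤ v i) (U : ℝ) (hU : 0 ≤ U)
    (h : U ≤ ∑ i ∈ J, v i) :
    U ^ 6 ≤ 6 ^ 6 * ∑ i ∈ J, v i ^ 6 + (2 * (J.card : ℝ)) ^ 6 *
      ∑ i ∈ J, ∑ j ∈ J, if |i - j| ≤ 1 then 0 else v i ^ 2 * v j ^ 4 := by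
  have hn1 : 0 ≤ ∑ i ∈ J, v i ^ 6 := Finset.sum_nonneg fun i _ => pow_nonneg (hv i) 6
  have hterm : ∀ i j, 0 ≤ (if |i - j| ≤ 1 then 0 else v i ^ 2 * v j ^ 4) := by
    intro i j
    have := hv i
    have := hv j
    split_ifs <;> positivity
  have hn2 : 0 ≤ ∑ i ∈ J, ∑ j ∈ J, if |i - j| ≤ 1 then 0 else v i ^ 2 * v j ^ 4 :=
    Finset.sum_nonneg fun i _ => Finset.sum_nonneg fun j _ => hterm i j
  rcases J.eq_empty_or_nonempty with rfl | hne
  · simp at h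
    have : U = 0 := le_antisymm h hU
    simp [this]
  obtain ⟨s, hs, hmax⟩ := J.exists_max_image v hne
  have hM : (0:ℝ) < J.card := by exact_mod_cast hne.card_pos
  by_cases hc : ∃ j ∈ J, ¬ |s - j| ≤ 1 ∧ U ≤ 2 * (J.card : ℝ) * v j
  · obtain ⟨j, hj, hsj, hUj⟩ := hc
    have hUs : U ≤ 2 * (J.card : ℝ) * v s := hUj.trans (by have := hmax j hj; gcongr)
    have h1 : U ^ 6 ≤ (2 * (J.card : ℝ)) ^ 6 * (v s ^ 2 * v j ^ 4) := by
      calc U ^ 6 = U ^ 2 * U ^ 4 := by ring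
        _ ≤ (2 * (J.card : ℝ) * v s) ^ 2 * (2 * (J.card : ℝ) * v j) ^ 4 := by gcongr
        _ = _ := by ring
    have h2 : v s ^ 2 * v j ^ 4 ≤
        ∑ i ∈ J, ∑ j ∈ J, if |i - j| ≤ 1 then 0 else v i ^ 2 * v j ^ 4 := by
      calc v s ^ 2 * v j ^ 4 = if |s - j| ≤ 1 then 0 else v s ^ 2 * v j ^ 4 := by rw [if_neg hsj]
        _ ≤ ∑ j ∈ J, if |s - j| ≤ 1 then 0 else v s ^ 2 * v j ^ 4 :=
          Finset.single_le_sum (f := fun j => if |s - j| ≤ 1 then 0 else v s ^ 2 * v j ^ 4)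
            (fun j _ => hterm s j) hj
        _ ≤ _ := Finset.single_le_sum
            (f := fun i => ∑ j ∈ J, if |i - j| ≤ 1 then 0 else v i ^ 2 * v j ^ 4)
            (fun i _ => Finset.sum_nonneg fun j _ => hterm i j) hs
    have h3 := mul_le_mul_of_nonneg_left h2 (by positivity : 0 ≤ (2 * (J.card : ℝ)) ^ 6)
    linarith
  · push Not at hc
    have h1 : ∑ i ∈ J, v i ≤ 3 * v s + U / 2 := by
      rw [← Finset.sum_filter_add_sum_filter_not J (fun j => |s - j| ≤ 1)]
      have e1 : ∑ i ∈ J with |s - i| ≤ 1, v i ≤ 3 * v s := by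
        have := Finset.sum_le_card_nsmul (J.filter (fun j => |s - j| ≤ 1)) v (v s)
          (fun i hi => hmax i (Finset.mem_filter.mp hi).1)
        rw [nsmul_eq_mul] at this
        have hc3 : ((J.filter (fun j => |s - j| ≤ 1)).card : ℝ) ≤ 3 := by
          exact_mod_cast near_card J s
        exact this.trans (mul_le_mul_of_nonneg_right hc3 (hv s))
      have e2 : ∑ i ∈ J with ¬ |s - i| ≤ 1, v i ≤ U / 2 := by
        have := Finset.sum_le_card_nsmul (J.filter (fun j => ¬ |s - j| ≤ 1)) v
          (U / (2 * (J.card : ℝ)))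
          (fun i hi => by
            have hi := Finset.mem_filter.mp hi
            rw [le_div_iff₀ (by positivity), mul_comm]
            exact (hc i hi.1 (not_le.mp hi.2)).le)
        rw [nsmul_eq_mul] at this
        have hc3 : ((J.filter (fun j => ¬ |s - j| ≤ 1)).card : ℝ) ≤ J.card := by
          exact_mod_cast Finset.card_filter_le _ _
        refine this.trans ?_
        calc _ ≤ (J.card : ℝ) * (U / (2 * (J.card : ℝ))) := by gcongr
          _ = U / 2 := by field_simp
      linarith
    have h2 : U ≤ 6 * v s := by linarith
    have h3 : v s ^ 6 ≤ ∑ i ∈ J, v i ^ 6 :=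
      Finset.single_le_sum (f := fun i => v i ^ 6) (fun i _ => pow_nonneg (hv i) 6) hs
    have h4 : U ^ 6 ≤ 6 ^ 6 * v s ^ 6 := by
      calc U ^ 6 ≤ (6 * v s) ^ 6 := by gcongr
        _ = _ := by ring
    have h5 := mul_nonneg (by positivity : 0 ≤ (2 * (J.card : ℝ)) ^ 6) hn2
    linarith

lemma E_broad (S : Finset ℤ) (l : ℝ) :
    E χ S ≤ 6 ^ 6 * ∑ i ∈ ix S l, E χ (pc S l i) + (2 * ((ix S l).card : ℝ)) ^ 6 *
      ∑ i ∈ ix S l, ∑ j ∈ ix S l,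
        if |i - j| ≤ 1 then 0 else B χ (pc S l i) (pc S l j) := by
  have h1 : E χ S ≤ ∑ x, (6 ^ 6 * ∑ i ∈ ix S l, ‖F χ (pc S l i) x‖ ^ 6 +
      (2 * ((ix S l).card : ℝ)) ^ 6 * ∑ i ∈ ix S l, ∑ j ∈ ix S l,
        if |i - j| ≤ 1 then 0 else ‖F χ (pc S l i) x‖ ^ 2 * ‖F χ (pc S l j) x‖ ^ 4) :=
    Finset.sum_le_sum fun x _ => broad_narrow _ _ (fun i => norm_nonneg _) _ (norm_nonneg _)
      (norm_F_pc χ S l x)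
  refine h1.trans (le_of_eq ?_)
  rw [Finset.sum_add_distrib, ← Finset.mul_sum, ← Finset.mul_sum, Finset.sum_comm]
  congr 2
  rw [Finset.sum_comm]
  refine Finset.sum_congr rfl fun i _ => ?_
  rw [Finset.sum_comm]
  refine Finset.sum_congr rfl fun j _ => ?_
  split_ifs
  · simp
  · rfl

end

section
variable {Ω : Type} [Fintype Ω] (χ : ℤ → Ω → ℂ)

lemma step {I : Finset ℤ} {A : ℝ} (hA : 1 ≤ A) (hT : Trans χ I A) {η C X : ℝ} (hη : 0 < η)
    (hC : 0 ≤ C)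
    (hE : ∀ S ⊆ I, ∀ r, 1 ≤ r → r ≤ X → Diam S r → E χ S ≤ C * r ^ (3 + η))
    (n : ℕ) (hn : ((2 * 1002) ^ 6 * 1002 ^ 2 * (6 * A) ^ 6 * 81) * ((2 : ℝ) ^ (-η)) ^ n ≤ 1 / 2)
    (S : Finset ℤ) (hS : S ⊆ I) (R : ℝ) (hRX : R ≤ 2 * X) (hR : 1000 * A * 2 ^ (2 ^ (n + 1)) ≤ R)
    (hdS : Diam S R) : E χ S ≤ C * R ^ (3 + η) := by
  have hA0 : 0 < A := by linarith
  have hp1 : (1:ℝ) ≤ 2 ^ (2 ^ (n + 1)) := one_le_pow₀ (by norm_num)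
  have hR1 : 1000 ≤ R := by nlinarith
  have hR0 : 0 < R := by linarith
  set l := R / 1000 with hl
  have hl0 : 0 < l := by positivity
  set D := l / A with hDdef
  have hD0 : 0 < D := by positivity
  have hAD : A * D = l := by rw [hDdef]; field_simp
  have hDl : D ≤ l := div_le_self hl0.le hA
  have hlX : l ≤ X := by rw [hl]; linarith
  have hlR : l ≤ R := by rw [hl]; linarith
  have hl1 : 1 ≤ l := by rw [hl]; linarith
  have hDbig : (2:ℝ) ^ (2 ^ (n + 1)) ≤ D := by
    rw [hDdef, le_div_iff₀ hA0, hl, le_div_iff₀ (by norm_num)]; linarith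
  have hW : 0 < R ^ (3 + η) := by positivity
  have hDW : D ^ (3 + η) ≤ R ^ (3 + η) := by
    apply Real.rpow_le_rpow hD0.le _ (by linarith); linarith
  have hlW : l ^ (3 + η) ≤ R ^ (3 + η) / 1000 ^ 3 := by
    rw [hl, Real.div_rpow hR0.le (by norm_num)]
    gcongr
    have : (1000:ℝ) ^ (3:ℝ) = 1000 ^ 3 := by exact_mod_cast Real.rpow_natCast 1000 3
    rw [← this]
    exact Real.rpow_le_rpow_of_exponent_le (by norm_num) (by linarith)
  set z := ((2 : ℝ) ^ (-η)) ^ n with hz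
  have hz0 : 0 < z := by positivity
  have hcard : ((ix S l).card : ℝ) ≤ 1002 := by
    have := ix_card hl0 hR0.le hdS
    have e : R / l = 1000 := by rw [hl]; field_simp
    rw [e] at this; linarith
  have hpieceE : ∀ i ∈ ix S l, E χ (pc S l i) ≤ C * (R ^ (3 + η) / 1000 ^ 3) := by
    intro i _
    refine (hE _ ((pc_subset _ _ _).trans hS) l hl1 hlX (pc_diam S hl0 i)).trans ?_
    gcongr
  set γ := (6 * A) ^ 6 * (81 * C * R ^ (3 + η) * z) with hγ
  have hγ0 : 0 ≤ γ := by positivity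
  have hpieceB : ∀ i ∈ ix S l, ∀ j ∈ ix S l,
      (if |i - j| ≤ 1 then 0 else B χ (pc S l i) (pc S l j)) ≤ γ := by
    intro i _ j _
    split_ifs with hij
    · exact hγ0
    set P := pc S l i
    set P' := pc S l j
    have hsep : ∀ s ∈ P, ∀ t ∈ P', A * D ≤ |(s : ℝ) - t| := by
      intro s hs t ht
      rw [hAD]
      have b1 := pc_bound hl0 hs
      have b2 := pc_bound hl0 ht
      have : i - j ≥ 2 ∨ j - i ≥ 2 := by
        rw [abs_le] at hij; omega
      rw [le_abs]
      rcases this with h | h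
      · left
        have h' : (2:ℝ) ≤ (i:ℝ) - j := by exact_mod_cast h
        nlinarith
      · right
        have h' : (2:ℝ) ≤ (j:ℝ) - i := by exact_mod_cast h
        nlinarith
    have hPI : P ⊆ I := (pc_subset _ _ _).trans hS
    have hPI' : P' ⊆ I := (pc_subset _ _ _).trans hS
    have hD2 : 0 < D / 2 := by positivity
    have hD4 : 0 < D / 2 ^ 2 := by positivity
    have hco := coarse χ P P' (D / 2) (D / 2 ^ 2) (81 * C * R ^ (3 + η) * z) (by positivity) (by
      intro a _ b _
      refine (iter χ hA hT hη hC hE hD0 (hDl.trans hlX) n 2 le_rfl hDbig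
        (pc P (D / 2) a) ((pc_subset _ _ _).trans hPI)
        (pc P' (D / 2 ^ 2) b) ((pc_subset _ _ _).trans hPI')
        (pc_diam _ hD2 _) (pc_diam _ hD4 _)
        (fun s hs t ht => hsep s (pc_subset _ _ _ hs) t (pc_subset _ _ _ ht))).trans ?_
      rw [← hz]
      refine (div_le_self (by positivity) (by norm_num)).trans ?_
      gcongr)
    have c1 := ix_card hD2 hl0.le (pc_diam S hl0 i)
    have c2 := ix_card hD4 hl0.le (pc_diam S hl0 j)
    have e1 : l / (D / 2) = 2 * A := by rw [← hAD]; field_simp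
    have e2 : l / (D / 2 ^ 2) = 4 * A := by rw [← hAD]; field_simp; norm_num
    rw [e1] at c1
    rw [e2] at c2
    have c1' : ((ix P (D / 2)).card : ℝ) ≤ 6 * A := by linarith
    have c2' : ((ix P' (D / 2 ^ 2)).card : ℝ) ≤ 6 * A := by linarith
    refine hco.trans ?_
    rw [hγ]
    calc _ ≤ (6 * A) ^ 2 * (6 * A) ^ 4 * (81 * C * R ^ (3 + η) * z) := by gcongr
      _ = _ := by ring
  have hbr := E_broad χ S l
  have s1 := Finset.sum_le_card_nsmul _ _ _ hpieceE
  have s2 := Finset.sum_le_card_nsmul _ _ _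
    (fun i hi => Finset.sum_le_card_nsmul _ _ _ (hpieceB i hi))
  rw [nsmul_eq_mul] at s1
  rw [nsmul_eq_mul, nsmul_eq_mul] at s2
  have t1 : ∑ i ∈ ix S l, E χ (pc S l i) ≤ 1002 * (C * (R ^ (3 + η) / 1000 ^ 3)) :=
    s1.trans (by gcongr)
  have t2 : (∑ i ∈ ix S l, ∑ j ∈ ix S l,
        if |i - j| ≤ 1 then 0 else B χ (pc S l i) (pc S l j)) ≤ 1002 * (1002 * γ) :=
    s2.trans (by gcongr)
  have t3 : (2 * ((ix S l).card : ℝ)) ^ 6 * (∑ i ∈ ix S l, ∑ j ∈ ix S l,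
        if |i - j| ≤ 1 then 0 else B χ (pc S l i) (pc S l j)) ≤
        (2 * 1002) ^ 6 * (1002 * (1002 * γ)) := by
    have p1 : (2 * ((ix S l).card : ℝ)) ^ 6 ≤ (2 * 1002) ^ 6 := by gcongr
    exact (mul_le_mul_of_nonneg_left t2 (by positivity)).trans
      (mul_le_mul_of_nonneg_right p1 (by positivity))
  have t4 : (2 * 1002) ^ 6 * (1002 * (1002 * γ)) ≤ C * R ^ (3 + η) * (1 / 2) := by
    have := mul_le_mul_of_nonneg_left hn (by positivity : 0 ≤ C * R ^ (3 + η))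
    refine le_trans (le_of_eq ?_) this
    rw [hγ]; ring
  have hCW : 0 ≤ C * R ^ (3 + η) := by positivity
  have t5 : 6 ^ 6 * (1002 * (C * (R ^ (3 + η) / 1000 ^ 3))) ≤ C * R ^ (3 + η) * (1 / 2) := by
    have : 6 ^ 6 * (1002 * (C * (R ^ (3 + η) / 1000 ^ 3))) =
      C * R ^ (3 + η) * (6 ^ 6 * 1002 / 1000 ^ 3) := by ring
    rw [this]
    exact mul_le_mul_of_nonneg_left (by norm_num) hCW
  have t6 := mul_le_mul_of_nonneg_left t1 (by norm_num : (0:ℝ) ≤ 6 ^ 6)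
  linarith

end

theorem main_abs {A η : ℝ} (hA : 1 ≤ A) (hη : 0 < η) : ∃ K > (0:ℝ), ∀ (Ω : Type) [Fintype Ω]
    (χ : ℤ → Ω → ℂ) (I : Finset ℤ), Trans χ I A → (∀ n x, ‖χ n x‖ ≤ 1) →
    ∀ S ⊆ I, ∀ r : ℝ, 1 ≤ r → Diam S r → E χ S ≤ K * Fintype.card Ω * r ^ (3 + η) := by
  have hz1 : (2:ℝ) ^ (-η) < 1 := Real.rpow_lt_one_of_one_lt_of_neg (by norm_num) (by linarith)
  set big : ℝ := (2 * 1002) ^ 6 * 1002 ^ 2 * (6 * A) ^ 6 * 81 with hbig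
  have hbig0 : 0 < big := by positivity
  obtain ⟨n, hn⟩ := exists_pow_lt_of_lt_one (show 0 < 1 / 2 / big by positivity) hz1
  have hn' : big * ((2 : ℝ) ^ (-η)) ^ n ≤ 1 / 2 := by
    rw [lt_div_iff₀ hbig0] at hn; linarith
  set r0 : ℝ := 1000 * A * 2 ^ (2 ^ (n + 1)) with hr0
  have hp1 : (1:ℝ) ≤ 2 ^ (2 ^ (n + 1)) := one_le_pow₀ (by norm_num)
  have hr01 : 1 ≤ r0 := by nlinarith
  refine ⟨(2 * r0) ^ 6, by positivity, ?_⟩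
  intro Ω _ χ I hT hχ
  set C : ℝ := (2 * r0) ^ 6 * Fintype.card Ω with hC
  have hC0 : 0 ≤ C := by positivity
  have base : ∀ S ⊆ I, ∀ r : ℝ, 1 ≤ r → r ≤ r0 → Diam S r → E χ S ≤ C * r ^ (3 + η) := by
    intro S _ r hr hrr hd
    have hcard : (S.card : ℝ) ≤ 2 * r0 := by
      rcases S.eq_empty_or_nonempty with rfl | hne
      · simp; linarith
      obtain ⟨m, hm, hmin⟩ := S.exists_min_image id hne
      have hsub : S ⊆ Finset.Icc m (m + ⌊r⌋) := by
        intro a ha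
        rw [Finset.mem_Icc]
        refine ⟨hmin a ha, ?_⟩
        have h1 := hd a ha m hm
        have : a - m ≤ ⌊r⌋ := by rw [Int.le_floor]; push_cast; exact h1
        linarith
      have h1 := Finset.card_le_card hsub
      rw [Int.card_Icc] at h1
      have h2 : (0:ℤ) ≤ ⌊r⌋ := Int.floor_nonneg.mpr (by linarith)
      have h3 : (S.card : ℤ) ≤ ⌊r⌋ + 1 := by omega
      have h4 : (S.card : ℝ) ≤ ⌊r⌋ + 1 := by exact_mod_cast h3
      have := Int.floor_le r
      linarith
    have h1 : E χ S ≤ C := by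
      have : ∀ x ∈ (Finset.univ : Finset Ω), ‖F χ S x‖ ^ 6 ≤ (2 * r0) ^ 6 := by
        intro x _
        have : ‖F χ S x‖ ≤ 2 * r0 := by
          refine le_trans ?_ hcard
          refine (norm_sum_le _ _).trans ?_
          have := Finset.sum_le_card_nsmul S (fun n => ‖χ n x‖) 1 (fun n _ => hχ n x)
          simpa using this
        gcongr
      have := Finset.sum_le_card_nsmul _ _ _ this
      rw [nsmul_eq_mul, mul_comm, Finset.card_univ] at this
      exact this
    have h2 : 1 ≤ r ^ (3 + η) := Real.one_le_rpow hr (by linarith)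
    nlinarith
  have ind : ∀ m : ℕ, ∀ S ⊆ I, ∀ r : ℝ, 1 ≤ r → r ≤ r0 * 2 ^ m → Diam S r →
      E χ S ≤ C * r ^ (3 + η) := by
    intro m
    induction m with
    | zero => simpa using base
    | succ m ih =>
      intro S hS r hr hrr hd
      by_cases h : r ≤ r0
      · exact base S hS r hr h hd
      · exact step χ hA hT hη hC0 ih n hn' S hS r (by rw [pow_succ] at hrr; linarith)
          (not_le.mp h).le hd
  intro S hS r hr hd
  obtain ⟨m, hm⟩ := pow_unbounded_of_one_lt r (by norm_num : (1:ℝ) < 2)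
  refine ind m S hS r hr ?_ hd
  have : (0:ℝ) < 2 ^ m := by positivity
  nlinarith

lemma taylor (a b M : ℝ) (ha : 0 ≤ a) (hb : 0 ≤ b) (haM : a ≤ M) (hbM : b ≤ M) (j : ℕ) :
    0 ≤ b ^ (j + 2) - a ^ (j + 2) - (j + 2) * a ^ (j + 1) * (b - a) ∧
    b ^ (j + 2) - a ^ (j + 2) - (j + 2) * a ^ (j + 1) * (b - a) ≤
      (j + 2) ^ 2 * M ^ j * (b - a) ^ 2 := by
  have hM : 0 ≤ M := ha.trans haM
  induction j with
  | zero =>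
    have : b ^ (0 + 2) - a ^ (0 + 2) - (((0:ℕ):ℝ) + 2) * a ^ (0 + 1) * (b - a) = (b - a) ^ 2 := by
      push_cast; ring
    rw [this]
    have := sq_nonneg (b - a)
    refine ⟨this, ?_⟩
    push_cast
    nlinarith
  | succ j ih =>
    obtain ⟨h1, h2⟩ := ih
    set R := b ^ (j + 2) - a ^ (j + 2) - (j + 2) * a ^ (j + 1) * (b - a) with hR
    have e : b ^ (j + 1 + 2) - a ^ (j + 1 + 2) - (((j + 1 : ℕ) : ℝ) + 2) * a ^ (j + 1 + 1) * (b - a) =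
        b * R + (j + 2) * a ^ (j + 1) * (b - a) ^ 2 := by
      rw [hR]; push_cast; ring
    rw [e]
    refine ⟨by positivity, ?_⟩
    have h3 : b * R ≤ M * ((j + 2) ^ 2 * M ^ j * (b - a) ^ 2) := by gcongr
    have h4 : (j + 2) * a ^ (j + 1) * (b - a) ^ 2 ≤ (j + 2) * M ^ (j + 1) * (b - a) ^ 2 := by
      gcongr
    have h5 : 0 ≤ M ^ (j + 1) * (b - a) ^ 2 := by positivity
    have h6 : (0:ℝ) ≤ j := by positivity
    have h7 : 0 ≤ ((j:ℝ) + 3) * (M ^ (j + 1) * (b - a) ^ 2) := by positivity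
    push_cast
    have h8 : M * ((j + 2) ^ 2 * M ^ j * (b - a) ^ 2) =
      ((j:ℝ) + 2) ^ 2 * (M ^ (j + 1) * (b - a) ^ 2) := by ring
    rw [h8] at h3
    nlinarith

lemma deriv_gap (a b N : ℝ) (hN : 0 ≤ N) (ha : N ≤ a) (hab : a ≤ b) (j : ℕ) :
    N ^ j * (b - a) ≤ b ^ (j + 1) - a ^ (j + 1) := by
  have h1 : N ^ j ≤ b ^ j := by gcongr; linarith
  have h2 : a ^ j ≤ b ^ j := by
    have : 0 ≤ a := by linarith
    gcongr
  have e : b ^ (j + 1) - a ^ (j + 1) = b ^ j * (b - a) + a * (b ^ j - a ^ j) := by ring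
  rw [e]
  have h3 : N ^ j * (b - a) ≤ b ^ j * (b - a) := by
    apply mul_le_mul_of_nonneg_right h1; linarith
  have h4 : 0 ≤ a * (b ^ j - a ^ j) := mul_nonneg (by linarith) (by linarith)
  linarith

/-- real transversality -/
lemma trans_real (f f' : ℝ → ℝ) (lo hi K : ℝ)
    (h1 : ∀ a b, lo ≤ a → a ≤ hi → lo ≤ b → b ≤ hi → 0 ≤ f b - f a - f' a * (b - a))
    (h2 : ∀ a b, lo ≤ a → a ≤ hi → lo ≤ b → b ≤ hi → f b - f a - f' a * (b - a) ≤ K * (b - a) ^ 2)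
    (h3 : ∀ a b, lo ≤ a → a ≤ b → b ≤ hi → b - a ≤ f' b - f' a) (hK : 0 ≤ K)
    (r d : ℝ) (hr : 1 ≤ r) (hrd : r < d) (n₁ n₂ m₁ m₂ m₃ m₄ : ℝ)
    (hn₁ : lo ≤ n₁ ∧ n₁ ≤ hi) (hn₂ : lo ≤ n₂ ∧ n₂ ≤ hi) (hm₁ : lo ≤ m₁ ∧ m₁ ≤ hi)
    (hm₂ : lo ≤ m₂ ∧ m₂ ≤ hi) (hm₃ : lo ≤ m₃ ∧ m₃ ≤ hi) (hm₄ : lo ≤ m₄ ∧ m₄ ≤ hi)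
    (d2 : |m₂ - m₁| ≤ r) (d3 : |m₃ - m₁| ≤ r) (d4 : |m₄ - m₁| ≤ r) (d24 : |m₄ - m₂| ≤ r)
    (e1 : d ≤ |n₁ - m₁|) (e2 : d ≤ |n₂ - m₁|)
    (hlin : n₁ + m₁ + m₂ = n₂ + m₃ + m₄)
    (hf : |f n₁ + f m₁ + f m₂ - f n₂ - f m₃ - f m₄| ≤ 6) :
    |n₁ - n₂| ≤ (2 * K + 6) * r ^ 2 / d := by
  have hd : 0 < d := by linarith
  obtain ⟨h, hh⟩ : ∃ h : ℝ → ℝ, ∀ t, h t = f t - f m₁ - f' m₁ * (t - m₁) := ⟨_, fun _ => rfl⟩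
  have hsq : ∀ t, |t - m₁| ≤ r → K * (t - m₁) ^ 2 ≤ K * r ^ 2 := by
    intro t ht
    have : (t - m₁) ^ 2 ≤ r ^ 2 := by
      rw [← sq_abs]; gcongr
    gcongr
  have hup : ∀ t, lo ≤ t ∧ t ≤ hi → |t - m₁| ≤ r → 0 ≤ h t ∧ h t ≤ K * r ^ 2 := by
    intro t ht htr
    rw [hh]
    exact ⟨h1 m₁ t hm₁.1 hm₁.2 ht.1 ht.2, (h2 m₁ t hm₁.1 hm₁.2 ht.1 ht.2).trans (hsq t htr)⟩
  have g2 := hup m₂ hm₂ d2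
  have g3 := hup m₃ hm₃ d3
  have g4 := hup m₄ hm₄ d4
  have hdiff : h n₁ - h n₂ =
      (f n₁ + f m₁ + f m₂ - f n₂ - f m₃ - f m₄) + h m₃ + h m₄ - h m₂ := by
    simp only [hh]
    linear_combination (-f' m₁) * hlin
  have hKr : 0 ≤ K * r ^ 2 := by positivity
  have hr2 : 1 ≤ r ^ 2 := one_le_pow₀ hr
  have habs : |h n₁ - h n₂| ≤ (2 * K + 6) * r ^ 2 := by
    rw [hdiff]
    rw [abs_le] at hf ⊢
    constructor <;> nlinarith
  have gap : ∀ a b, lo ≤ a → b ≤ hi → a ≤ b → (m₁ + d ≤ a ∨ b ≤ m₁ - d) →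
      d * (b - a) ≤ |h b - h a| := by
    intro a b ha hb hab hc
    rcases hc with hc | hc
    · have k1 := h1 a b ha (hab.trans hb) (ha.trans hab) hb
      have k2 := h3 m₁ a hm₁.1 (by linarith) (hab.trans hb)
      have k3 : d * (b - a) ≤ (f' a - f' m₁) * (b - a) :=
        mul_le_mul_of_nonneg_right (by linarith) (by linarith)
      refine le_trans ?_ (le_abs_self _)
      rw [hh, hh]; linarith
    · have k1 := h1 b a (ha.trans hab) hb ha (hab.trans hb)
      have k2 := h3 b m₁ (ha.trans hab) (by linarith) hm₁.2
      have k3 : d * (b - a) ≤ (f' m₁ - f' b) * (b - a) :=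
        mul_le_mul_of_nonneg_right (by linarith) (by linarith)
      refine le_trans ?_ (neg_le_abs _)
      rw [hh, hh]; linarith
  rw [le_div_iff₀ hd]
  refine le_trans ?_ habs
  rw [abs_le] at d2 d3 d4 d24
  rw [le_abs] at e1 e2
  have hside : (m₁ + d ≤ n₁ ∧ m₁ + d ≤ n₂) ∨ (n₁ ≤ m₁ - d ∧ n₂ ≤ m₁ - d) := by
    rcases e1 with e1 | e1 <;> rcases e2 with e2 | e2
    · left; constructor <;> linarith
    · exfalso; linarith
    · exfalso; linarith
    · right; constructor <;> linarith
  rcases le_total n₁ n₂ with hle | hle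
  · have := gap n₁ n₂ hn₁.1 hn₂.2 hle (by rcases hside with h | h; exacts [Or.inl h.1, Or.inr h.2])
    rw [abs_sub_comm n₁, abs_of_nonneg (by linarith : 0 ≤ n₂ - n₁), abs_sub_comm, mul_comm]
    exact this
  · have := gap n₂ n₁ hn₂.1 hn₁.2 hle (by rcases hside with h | h; exacts [Or.inl h.2, Or.inr h.1])
    rw [abs_of_nonneg (by linarith : 0 ≤ n₁ - n₂), mul_comm]
    exact this

def chi (M : ℕ) [NeZero M] (g : ℤ → ℤ) (n : ℤ) (x : ZMod M × ZMod M) : ℂ :=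
  ZMod.stdAddChar (x.1 * (n : ZMod M) + x.2 * (g n : ZMod M))

lemma ortho (M : ℕ) [NeZero M] (a b : ℤ) (ha : |a| < M) (hb : |b| < M) :
    ∑ x : ZMod M × ZMod M, ZMod.stdAddChar (x.1 * (a : ZMod M) + x.2 * (b : ZMod M)) =
      if a = 0 ∧ b = 0 then (Fintype.card (ZMod M × ZMod M) : ℂ) else 0 := by
  have hz : ∀ c : ℤ, |c| < M → ((c : ZMod M) = 0 ↔ c = 0) := by
    intro c hc
    rw [ZMod.intCast_zmod_eq_zero_iff_dvd]
    exact ⟨fun h => Int.eq_zero_of_abs_lt_dvd h hc, fun h => h ▸ dvd_zero _⟩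
  rw [Fintype.sum_prod_type]
  simp only [AddChar.map_add_eq_mul]
  rw [← Finset.sum_mul_sum, AddChar.sum_mulShift _ (ZMod.isPrimitive_stdAddChar M),
    AddChar.sum_mulShift _ (ZMod.isPrimitive_stdAddChar M)]
  simp only [hz a ha, hz b hb]
  by_cases h1 : a = 0 <;> by_cases h2 : b = 0 <;> simp [h1, h2]

open ComplexConjugate in
lemma chi_six (M : ℕ) [NeZero M] (g : ℤ → ℤ) (a b c d e f : ℤ) (x : ZMod M × ZMod M) :
    chi M g a x * chi M g b x * chi M g c x * conj (chi M g d x) * conj (chi M g e x) *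
      conj (chi M g f x) =
    ZMod.stdAddChar (x.1 * ((a + b + c - d - e - f : ℤ) : ZMod M) +
      x.2 * ((g a + g b + g c - g d - g e - g f : ℤ) : ZMod M)) := by
  unfold chi
  simp only [← AddChar.map_neg_eq_conj, ← AddChar.map_add_eq_mul]
  congr 1
  push_cast
  ring

lemma chi_norm (M : ℕ) [NeZero M] (g : ℤ → ℤ) (n : ℤ) (x : ZMod M × ZMod M) :
    ‖chi M g n x‖ ≤ 1 := by
  unfold chi; rw [AddChar.norm_apply]

lemma trans_chi (f f' : ℝ → ℝ) (g : ℤ → ℤ) (hg : ∀ n, g n = ⌊f n⌋) (I : Finset ℤ) (lo hi K : ℝ)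
    (hI : ∀ n ∈ I, lo ≤ n ∧ (n : ℝ) ≤ hi)
    (h1 : ∀ a b, lo ≤ a → a ≤ hi → lo ≤ b → b ≤ hi → 0 ≤ f b - f a - f' a * (b - a))
    (h2 : ∀ a b, lo ≤ a → a ≤ hi → lo ≤ b → b ≤ hi → f b - f a - f' a * (b - a) ≤ K * (b - a) ^ 2)
    (h3 : ∀ a b, lo ≤ a → a ≤ b → b ≤ hi → b - a ≤ f' b - f' a) (hK : 0 ≤ K)
    (M : ℕ) [NeZero M] (hM1 : ∀ n ∈ I, 6 * |n| < M) (hM2 : ∀ n ∈ I, 6 * |g n| < M) :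
    Trans (chi M g) I (2 * K + 6) := by
  intro T hT r d hr hrd hdT n₁ hn₁ n₂ hn₂ e1 e2 m₁ hm₁ m₂ hm₂ m₃ hm₃ m₄ hm₄ hne
  have key : n₁ + m₁ + m₂ - n₂ - m₃ - m₄ = 0 ∧
      g n₁ + g m₁ + g m₂ - g n₂ - g m₃ - g m₄ = 0 := by
    by_contra hcon
    apply hne
    have := ortho M (n₁ + m₁ + m₂ - n₂ - m₃ - m₄) (g n₁ + g m₁ + g m₂ - g n₂ - g m₃ - g m₄)
      (by
        have := hM1 _ hn₁; have := hM1 _ hn₂; have := hM1 _ (hT hm₁); have := hM1 _ (hT hm₂)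
        have := hM1 _ (hT hm₃); have := hM1 _ (hT hm₄)
        grind)
      (by
        have := hM2 _ hn₁; have := hM2 _ hn₂; have := hM2 _ (hT hm₁); have := hM2 _ (hT hm₂)
        have := hM2 _ (hT hm₃); have := hM2 _ (hT hm₄)
        grind)
    rw [if_neg hcon] at this
    rw [← this]
    refine Finset.sum_congr rfl fun x _ => ?_
    rw [← chi_six]; ring
  obtain ⟨k1, k2⟩ := key
  have hd : ∀ a ∈ T, ∀ b ∈ T, |(a : ℝ) - b| ≤ r := by
    intro a ha b hb
    rw [abs_le]
    have := hdT a ha b hb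
    have := hdT b hb a ha
    constructor <;> linarith
  refine trans_real f f' lo hi K h1 h2 h3 hK r d hr hrd n₁ n₂ m₁ m₂ m₃ m₄ (hI _ hn₁) (hI _ hn₂)
    (hI _ (hT hm₁)) (hI _ (hT hm₂)) (hI _ (hT hm₃)) (hI _ (hT hm₄)) (hd _ hm₂ _ hm₁)
    (hd _ hm₃ _ hm₁) (hd _ hm₄ _ hm₁) (hd _ hm₄ _ hm₂) (e1 _ hm₁) (e2 _ hm₁) ?_ ?_
  · have : (n₁ + m₁ + m₂ : ℤ) = n₂ + m₃ + m₄ := by linarith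
    exact_mod_cast this
  · have k2' : (g n₁ : ℝ) + g m₁ + g m₂ - g n₂ - g m₃ - g m₄ = 0 := by exact_mod_cast k2
    have fl : ∀ n : ℤ, (g n : ℝ) ≤ f n ∧ f n < g n + 1 := by
      intro n; rw [hg]; exact ⟨Int.floor_le _, Int.lt_floor_add_one _⟩
    have := fl n₁; have := fl n₂; have := fl m₁; have := fl m₂; have := fl m₃; have := fl m₄
    rw [abs_le]; constructor <;> linarith

open ComplexConjugate in
lemma count_bound (M : ℕ) [NeZero M] (g : ℤ → ℤ) (S : Finset ℤ) (H : ℕ)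
    (hM1 : ∀ n ∈ S, 6 * |n| < M) (hM2 : ∀ n ∈ S, 6 * |g n| + H < M)
    (P : Finset (Fin 6 → ℤ)) (hP : ∀ t ∈ P, (∀ i, t i ∈ S) ∧
      t 0 + t 1 + t 2 - t 3 - t 4 - t 5 = 0 ∧
      |g (t 0) + g (t 1) + g (t 2) - g (t 3) - g (t 4) - g (t 5)| ≤ H) :
    (P.card : ℝ) * Fintype.card (ZMod M × ZMod M) ≤ (2 * H + 1) * E (chi M g) S := by
  classical
  set q := Fintype.piFinset (fun _ : Fin 6 => S) with hq
  set a : (Fin 6 → ℤ) → ℤ := fun t => t 0 + t 1 + t 2 - t 3 - t 4 - t 5 with ha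
  set b : (Fin 6 → ℤ) → ℤ :=
    fun t => g (t 0) + g (t 1) + g (t 2) - g (t 3) - g (t 4) - g (t 5) with hb
  set Z := Finset.Icc (-(H : ℤ)) H with hZ
  have hPq : P ⊆ q := fun t ht => Fintype.mem_piFinset.mpr (hP t ht).1
  -- counting for each h
  have hcount : ∀ h ∈ Z, ((P.filter (fun t => b t = h)).card : ℝ) *
      Fintype.card (ZMod M × ZMod M) ≤ E (chi M g) S := by
    intro h hh
    rw [hZ, Finset.mem_Icc] at hh
    have e1 : ∑ x : ZMod M × ZMod M, (F (chi M g) S x * F (chi M g) S x * F (chi M g) S x *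
        conj (F (chi M g) S x) * conj (F (chi M g) S x) * conj (F (chi M g) S x)) *
          ZMod.stdAddChar (x.2 * ((-h : ℤ) : ZMod M)) =
        ((q.filter (fun t => a t = 0 ∧ b t = h)).card : ℂ) *
          (Fintype.card (ZMod M × ZMod M) : ℂ) := by
      have e2 : ∀ x : ZMod M × ZMod M, (F (chi M g) S x * F (chi M g) S x * F (chi M g) S x *
          conj (F (chi M g) S x) * conj (F (chi M g) S x) * conj (F (chi M g) S x)) =
          ∑ t ∈ q, (chi M g (t 0) x * chi M g (t 1) x * chi M g (t 2) x * conj (chi M g (t 3) x)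
            * conj (chi M g (t 4) x) * conj (chi M g (t 5) x)) := by
        intro x
        have := Finset.prod_univ_sum (fun _ : Fin 6 => S)
          (fun i n => if i < 3 then chi M g n x else conj (chi M g n x))
        simp only [Fin.prod_univ_six] at this
        simpa [F, map_sum, hq, Fin.lt_def] using this
      have e3 : ∀ t ∈ q, ∑ x : ZMod M × ZMod M, (chi M g (t 0) x * chi M g (t 1) x *
            chi M g (t 2) x * conj (chi M g (t 3) x)
            * conj (chi M g (t 4) x) * conj (chi M g (t 5) x)) *
            ZMod.stdAddChar (x.2 * ((-h : ℤ) : ZMod M)) =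
          if a t = 0 ∧ b t = h then (Fintype.card (ZMod M × ZMod M) : ℂ) else 0 := by
        intro t ht
        have ht' := Fintype.mem_piFinset.mp ht
        have := ortho M (a t) (b t - h)
          (by
            have := hM1 _ (ht' 0); have := hM1 _ (ht' 1); have := hM1 _ (ht' 2)
            have := hM1 _ (ht' 3); have := hM1 _ (ht' 4); have := hM1 _ (ht' 5)
            simp only [ha]
            grind)
          (by
            have := hM2 _ (ht' 0); have := hM2 _ (ht' 1); have := hM2 _ (ht' 2)
            have := hM2 _ (ht' 3); have := hM2 _ (ht' 4); have := hM2 _ (ht' 5)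
            simp only [hb]
            grind)
        simp only [sub_eq_zero] at this
        rw [← this]
        refine Finset.sum_congr rfl fun x _ => ?_
        rw [chi_six, ← AddChar.map_add_eq_mul]
        congr 1
        simp only [ha, hb]
        push_cast
        ring
      simp only [e2, Finset.sum_mul]
      rw [Finset.sum_comm, Finset.sum_congr rfl e3, ← Finset.sum_filter, Finset.sum_const,
        nsmul_eq_mul]
    have e4 : (((q.filter (fun t => a t = 0 ∧ b t = h)).card : ℝ)) *
        Fintype.card (ZMod M × ZMod M) ≤ E (chi M g) S := by
      have := congrArg norm e1
      rw [norm_mul, Complex.norm_natCast, Complex.norm_natCast] at this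
      rw [← this]
      refine (norm_sum_le _ _).trans (Finset.sum_le_sum fun x _ => ?_)
      rw [norm_mul, AddChar.norm_apply, mul_one]
      simp only [norm_mul, RCLike.norm_conj]
      exact le_of_eq (by ring)
    refine le_trans ?_ e4
    gcongr
    intro t ht
    have ht := Finset.mem_filter.mp ht
    exact Finset.mem_filter.mpr ⟨hPq ht.1, (hP t ht.1).2.1, ht.2⟩
  have hcard : P.card = ∑ h ∈ Z, (P.filter (fun t => b t = h)).card := by
    apply Finset.card_eq_sum_card_fiberwise
    intro t ht
    have := (hP t ht).2.2
    rw [abs_le] at this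
    simp only [hZ, Finset.coe_Icc, Set.mem_Icc]
    exact this
  have hZc : (Z.card : ℝ) = 2 * H + 1 := by
    rw [hZ, Int.card_Icc]
    have : ((H : ℤ) + 1 - -(H : ℤ)).toNat = 2 * H + 1 := by omega
    rw [this]; push_cast; ring
  rw [hcard]
  push_cast
  rw [Finset.sum_mul]
  have := Finset.sum_le_card_nsmul _ _ _ hcount
  rw [nsmul_eq_mul, hZc] at this
  exact this

end DC

theorem diophantine_count_perturbed (k : ℕ) (hk : 2 ≤ k) (C : ℝ) (hC : 0 < C) :
    ∀ ε > (0 : ℝ), ∃ Cε > (0 : ℝ), ∀ N : ℕ, 1 ≤ N →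
      (Nat.card {t : Fin 6 → ℤ //
          (∀ i, (N : ℤ) ≤ t i ∧ t i ≤ 2 * N) ∧
          t 0 + t 1 + t 2 = t 3 + t 4 + t 5 ∧
          ((|t 0 ^ k + t 1 ^ k + t 2 ^ k - t 3 ^ k - t 4 ^ k - t 5 ^ k| : ℤ) : ℝ) ≤
            C * (N : ℝ) ^ (k - 2)} : ℝ) ≤
        Cε * (N : ℝ) ^ ((3 : ℝ) + ε) := by
  classical
  intro ε hε
  obtain ⟨j, rfl⟩ : ∃ j, k = j + 2 := ⟨k - 2, by omega⟩
  simp only [Nat.add_sub_cancel]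
  set K : ℝ := ((j : ℝ) + 2) ^ 2 * 2 ^ j with hK
  have hK0 : 0 ≤ K := by positivity
  obtain ⟨K0, hK0pos, hmain⟩ := DC.main_abs (A := 2 * K + 6) (by linarith) hε
  set H : ℕ := ⌈C⌉₊ + 6 with hH
  refine ⟨(2 * H + 1) * K0, by positivity, ?_⟩
  intro N hN
  have hNr : (1:ℝ) ≤ N := by exact_mod_cast hN
  have hN0 : (0:ℝ) < N := by linarith
  have hNj : (0:ℝ) < (N:ℝ) ^ j := by positivity
  set f : ℝ → ℝ := fun t => t ^ (j + 2) / (N : ℝ) ^ j with hf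
  set f' : ℝ → ℝ := fun t => ((j : ℝ) + 2) * t ^ (j + 1) / (N : ℝ) ^ j with hf'
  set g : ℤ → ℤ := fun n => ⌊f n⌋ with hg
  set S : Finset ℤ := Finset.Icc (N : ℤ) (2 * N) with hS
  have hSr : ∀ n ∈ S, (N : ℝ) ≤ n ∧ (n : ℝ) ≤ 2 * N := by
    intro n hn
    have := Finset.mem_Icc.mp hn
    exact ⟨by exact_mod_cast this.1, by exact_mod_cast this.2⟩
  set M : ℕ := 6 * (∑ n ∈ S, (g n).natAbs) + 12 * N + H + 1 with hM
  haveI : NeZero M := ⟨by omega⟩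
  have hM1 : ∀ n ∈ S, 6 * |n| < M := by
    intro n hn
    have := Finset.mem_Icc.mp hn
    rw [abs_of_nonneg (by omega)]
    omega
  have hM2 : ∀ n ∈ S, 6 * |g n| + H < M := by
    intro n hn
    have := Finset.single_le_sum (f := fun n => (g n).natAbs) (fun _ _ => Nat.zero_le _) hn
    have h2 : |g n| = ((g n).natAbs : ℤ) := Int.abs_eq_natAbs _
    rw [h2]
    omega
  have hrem : ∀ a b : ℝ, f b - f a - f' a * (b - a) =
      (b ^ (j + 2) - a ^ (j + 2) - (j + 2) * a ^ (j + 1) * (b - a)) / (N : ℝ) ^ j := by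
    intro a b; simp only [hf, hf']; field_simp
  have htr : DC.Trans (DC.chi M g) S (2 * K + 6) := by
    apply DC.trans_chi f f' g (fun n => rfl) S N (2 * N) K hSr _ _ _ hK0 M hM1
    · intro n hn; have := hM2 n hn; omega
    · intro a b ha ha' hb hb'
      rw [hrem]
      exact div_nonneg (DC.taylor a b (2 * N) (by linarith) (by linarith) ha' hb' j).1 hNj.le
    · intro a b ha ha' hb hb'
      rw [hrem, div_le_iff₀ hNj]
      refine (DC.taylor a b (2 * N) (by linarith) (by linarith) ha' hb' j).2.trans (le_of_eq ?_)
      rw [hK, mul_pow]; ring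
    · intro a b ha hab hb
      have h1 := DC.deriv_gap a b N hN0.le ha hab j
      have e : f' b - f' a = ((j : ℝ) + 2) * (b ^ (j + 1) - a ^ (j + 1)) / (N : ℝ) ^ j := by
        simp only [hf']; ring
      rw [e, le_div_iff₀ hNj]
      have : (0:ℝ) ≤ j := by positivity
      have h2 : 0 ≤ (N:ℝ) ^ j * (b - a) := mul_nonneg hNj.le (by linarith)
      nlinarith
  have hE := hmain (ZMod M × ZMod M) (DC.chi M g) S htr (DC.chi_norm M g) S subset_rfl N hNr (by
    intro a ha b hb
    have := hSr a ha
    have := hSr b hb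
    linarith)
  set P : Finset (Fin 6 → ℤ) := (Fintype.piFinset (fun _ : Fin 6 => S)).filter (fun t =>
    t 0 + t 1 + t 2 = t 3 + t 4 + t 5 ∧
    ((|t 0 ^ (j + 2) + t 1 ^ (j + 2) + t 2 ^ (j + 2) - t 3 ^ (j + 2) - t 4 ^ (j + 2)
      - t 5 ^ (j + 2)| : ℤ) : ℝ) ≤ C * (N : ℝ) ^ j) with hP
  have hcard : Nat.card {t : Fin 6 → ℤ //
          (∀ i, (N : ℤ) ≤ t i ∧ t i ≤ 2 * N) ∧
          t 0 + t 1 + t 2 = t 3 + t 4 + t 5 ∧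
          ((|t 0 ^ (j + 2) + t 1 ^ (j + 2) + t 2 ^ (j + 2) - t 3 ^ (j + 2) - t 4 ^ (j + 2)
            - t 5 ^ (j + 2)| : ℤ) : ℝ) ≤ C * (N : ℝ) ^ j} = P.card := by
    apply Nat.subtype_card
    intro t
    simp only [hP, hS, Finset.mem_filter, Fintype.mem_piFinset, Finset.mem_Icc]
  rw [hcard]
  have hcb := DC.count_bound M g S H hM1 hM2 P (by
    intro t ht
    obtain ⟨h1, h2, h3⟩ := Finset.mem_filter.mp ht
    refine ⟨Fintype.mem_piFinset.mp h1, by linarith, ?_⟩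
    have fl : ∀ n : ℤ, (g n : ℝ) ≤ f n ∧ f n < g n + 1 :=
      fun n => ⟨Int.floor_le _, Int.lt_floor_add_one _⟩
    have hff : |f (t 0) + f (t 1) + f (t 2) - f (t 3) - f (t 4) - f (t 5)| ≤ C := by
      have e : f (t 0) + f (t 1) + f (t 2) - f (t 3) - f (t 4) - f (t 5) =
        ((t 0 : ℝ) ^ (j + 2) + (t 1 : ℝ) ^ (j + 2) + (t 2 : ℝ) ^ (j + 2) - (t 3 : ℝ) ^ (j + 2)
          - (t 4 : ℝ) ^ (j + 2) - (t 5 : ℝ) ^ (j + 2)) / (N : ℝ) ^ j := by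
        simp only [hf]; ring
      rw [e, abs_div, abs_of_pos hNj, div_le_iff₀ hNj]
      push_cast at h3
      exact h3
    have hCc := Nat.le_ceil C
    have hHr : (H : ℝ) = ⌈C⌉₊ + 6 := by rw [hH]; push_cast; ring
    have := fl (t 0); have := fl (t 1); have := fl (t 2)
    have := fl (t 3); have := fl (t 4); have := fl (t 5)
    have hfin : |(g (t 0) : ℝ) + g (t 1) + g (t 2) - g (t 3) - g (t 4) - g (t 5)| ≤ H := by
      rw [abs_le] at hff ⊢
      constructor <;> linarith
    exact_mod_cast hfin)
  have hc0 : (0:ℝ) < Fintype.card (ZMod M × ZMod M) := by exact_mod_cast Fintype.card_pos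
  refine le_of_mul_le_mul_right (hcb.trans ?_) hc0
  calc (2 * (H:ℝ) + 1) * DC.E (DC.chi M g) S
      ≤ (2 * H + 1) * (K0 * Fintype.card (ZMod M × ZMod M) * (N:ℝ) ^ (3 + ε)) := by gcongr
    _ = _ := by ring

end
end

section
/- Fix an integer k ≥ 4. For every ε > 0 there is a constant C_ε such that for every integer N ≥ 1 and every real 0 ≤ λ ≤ 1, one has ∫_{|x| ≤ 1} ∫_{0}^{λ} | Σ_{N ≤ n ≤ 2N} e(x n² + y n^k) |⁶ dy dx ≤ C_ε ( λ · N^{3+ε} + N^{4-k+ε} ), where the inner sum is over integers n with N ≤ n ≤ 2N. -/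
open MeasureTheory Real

noncomputable section

/-- `e(t) = e^{2πit}`. -/
def ee (t : ℝ) : ℂ := Complex.exp (2 * Real.pi * Complex.I * t)

/-- Partial sum of the family `f` over the block `[a, a+l)`. -/
def blockSum {X : Type*} (f : ℕ → X → ℂ) (a l : ℕ) (x : X) : ℂ :=
  ∑ i ∈ Finset.range l, f (a + i) x

lemma blockSum_mul {X : Type*} (f : ℕ → X → ℂ) (a l t : ℕ) (x : X) :
    blockSum f a (l * t) x = ∑ i ∈ Finset.range t, blockSum f (a + i * l) l x := by
  induction t with
  | zero => simp [blockSum]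
  | succ t ih =>
    rw [Finset.sum_range_succ, ← ih, blockSum, Nat.mul_succ, Finset.sum_range_add]
    simp only [blockSum]
    congr 1
    refine Finset.sum_congr rfl fun i _ => ?_
    congr 1
    ring

lemma blockSum_norm_le {X : Type*} (f : ℕ → X → ℂ) (hb : ∀ n x, ‖f n x‖ ≤ 1) (a l : ℕ) (x : X) :
    ‖blockSum f a l x‖ ≤ l := by
  unfold blockSum
  refine (norm_sum_le _ _).trans ?_
  refine (Finset.sum_le_sum fun i _ => hb (a+i) x).trans ?_
  simp

lemma blockSum_meas {X : Type*} [MeasurableSpace X] (f : ℕ → X → ℂ) (hf : ∀ n, Measurable (f n))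
    (a l : ℕ) : Measurable (blockSum f a l) := by
  unfold blockSum
  exact Finset.measurable_sum _ fun i _ => hf _

lemma integrable_mixed {X : Type*} [MeasurableSpace X] (μ : Measure X) [IsFiniteMeasure μ]
    (f : ℕ → X → ℂ) (hf : ∀ n, Measurable (f n)) (hb : ∀ n x, ‖f n x‖ ≤ 1)
    (a l a' l' a₃ l₃ i j k : ℕ) :
    Integrable (fun x => ‖blockSum f a l x‖ ^ i * ‖blockSum f a' l' x‖ ^ j
      * ‖blockSum f a₃ l₃ x‖ ^ k) μ := by
  have h1 := blockSum_meas f hf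
  refine Integrable.of_bound (C := (l:ℝ) ^ i * (l':ℝ) ^ j * (l₃:ℝ) ^ k) ?_ ?_
  · have := h1 a l
    have := h1 a' l'
    have := h1 a₃ l₃
    apply Measurable.aestronglyMeasurable
    fun_prop
  · refine Filter.Eventually.of_forall fun x => ?_
    rw [Real.norm_of_nonneg (by positivity)]
    gcongr <;> exact blockSum_norm_le f hb _ _ x

lemma integrable_two {X : Type*} [MeasurableSpace X] (μ : Measure X) [IsFiniteMeasure μ]
    (f : ℕ → X → ℂ) (hf : ∀ n, Measurable (f n)) (hb : ∀ n x, ‖f n x‖ ≤ 1)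
    (a l a' l' i j : ℕ) :
    Integrable (fun x => ‖blockSum f a l x‖ ^ i * ‖blockSum f a' l' x‖ ^ j) μ := by
  simpa using integrable_mixed μ f hf hb a l a' l' 0 0 i j 0

lemma integrable_one {X : Type*} [MeasurableSpace X] (μ : Measure X) [IsFiniteMeasure μ]
    (f : ℕ → X → ℂ) (hf : ∀ n, Measurable (f n)) (hb : ∀ n x, ‖f n x‖ ≤ 1)
    (a l i : ℕ) :
    Integrable (fun x => ‖blockSum f a l x‖ ^ i) μ := by
  simpa using integrable_mixed μ f hf hb a l 0 0 0 0 i 0 0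

/-- Far apart blocks are orthogonal against the fourth power of `B`. -/
lemma far_zero {X : Type*} [MeasurableSpace X] (μ : Measure X) [IsFiniteMeasure μ]
    (f : ℕ → X → ℂ) (hf : ∀ n, Measurable (f n)) (hb : ∀ n x, ‖f n x‖ ≤ 1)
    (a a' l c b : ℕ)
    (h : ∀ n n' m₁ m₂ m₃ m₄ : ℕ, a ≤ n → n < a + l → a' ≤ n' → n' < a' + l →
      c ≤ m₁ → m₁ < c + b → c ≤ m₂ → m₂ < c + b → c ≤ m₃ → m₃ < c + b → c ≤ m₄ → m₄ < c + b →
      ∫ x, f n x * (starRingEnd ℂ) (f n' x) * (f m₁ x * f m₂ x * (starRingEnd ℂ) (f m₃ x)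
        * (starRingEnd ℂ) (f m₄ x)) ∂μ = 0) :
    ∫ x, blockSum f a l x * (starRingEnd ℂ) (blockSum f a' l x) *
      ((‖blockSum f c b x‖ ^ 4 : ℝ) : ℂ) ∂μ = 0 := by
  have e : ∀ x, blockSum f a l x * (starRingEnd ℂ) (blockSum f a' l x) *
      ((‖blockSum f c b x‖ ^ 4 : ℝ) : ℂ) =
      ∑ i ∈ Finset.range l, ∑ i' ∈ Finset.range l, ∑ j₁ ∈ Finset.range b, ∑ j₂ ∈ Finset.range b,
        ∑ j₃ ∈ Finset.range b, ∑ j₄ ∈ Finset.range b,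
        f (a+i) x * (starRingEnd ℂ) (f (a'+i') x) * (f (c+j₁) x * f (c+j₂) x *
          (starRingEnd ℂ) (f (c+j₃) x) * (starRingEnd ℂ) (f (c+j₄) x)) := by
    intro x
    have h4 : ((‖blockSum f c b x‖ ^ 4 : ℝ) : ℂ) = blockSum f c b x * blockSum f c b x *
        (starRingEnd ℂ) (blockSum f c b x) * (starRingEnd ℂ) (blockSum f c b x) := by
      have := Complex.mul_conj' (blockSum f c b x)
      push_cast
      linear_combination (-‖blockSum f c b x‖ ^ 2 - blockSum f c b x * (starRingEnd ℂ) (blockSum f c b x)) * this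
    rw [h4]
    simp only [blockSum, map_sum]
    simp only [← Finset.mul_sum, ← Finset.sum_mul]
  simp_rw [e]
  have hInteg : ∀ n n' m₁ m₂ m₃ m₄ : ℕ, Integrable (fun x => f n x * (starRingEnd ℂ) (f n' x) *
      (f m₁ x * f m₂ x * (starRingEnd ℂ) (f m₃ x) * (starRingEnd ℂ) (f m₄ x))) μ := by
    intro n n' m₁ m₂ m₃ m₄
    refine Integrable.of_bound (C := 1) ?_ ?_
    · have hc : Measurable (starRingEnd ℂ) := Complex.continuous_conj.measurable
      have h1 : ∀ n, Measurable (fun x => (starRingEnd ℂ) (f n x)) := fun n => hc.comp (hf n)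
      apply Measurable.aestronglyMeasurable
      exact ((hf n).mul (h1 n')).mul ((((hf m₁).mul (hf m₂)).mul (h1 m₃)).mul (h1 m₄))
    · refine Filter.Eventually.of_forall fun x => ?_
      simp only [norm_mul, RCLike.norm_conj]
      calc _ ≤ (1:ℝ) * 1 * (1 * 1 * 1 * 1) := by gcongr <;> exact hb _ x
        _ = 1 := by norm_num
  rw [integral_finsetSum _ fun i _ => ?_]
  swap
  · repeat (refine integrable_finsetSum _ fun _ _ => ?_)
    exact hInteg _ _ _ _ _ _
  refine Finset.sum_eq_zero fun i hi => ?_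
  rw [integral_finsetSum _ fun i _ => ?_]
  swap
  · repeat (refine integrable_finsetSum _ fun _ _ => ?_)
    exact hInteg _ _ _ _ _ _
  refine Finset.sum_eq_zero fun i' hi' => ?_
  rw [integral_finsetSum _ fun i _ => ?_]
  swap
  · repeat (refine integrable_finsetSum _ fun _ _ => ?_)
    exact hInteg _ _ _ _ _ _
  refine Finset.sum_eq_zero fun j₁ hj₁ => ?_
  rw [integral_finsetSum _ fun i _ => ?_]
  swap
  · repeat (refine integrable_finsetSum _ fun _ _ => ?_)
    exact hInteg _ _ _ _ _ _
  refine Finset.sum_eq_zero fun j₂ hj₂ => ?_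
  rw [integral_finsetSum _ fun i _ => ?_]
  swap
  · repeat (refine integrable_finsetSum _ fun _ _ => ?_)
    exact hInteg _ _ _ _ _ _
  refine Finset.sum_eq_zero fun j₃ hj₃ => ?_
  rw [integral_finsetSum _ fun i _ => hInteg _ _ _ _ _ _]
  refine Finset.sum_eq_zero fun j₄ hj₄ => ?_
  simp only [Finset.mem_range] at *
  apply h <;> omega

/-- The L² decoupling step. -/
lemma key_step {X : Type*} [MeasurableSpace X] (μ : Measure X) [IsFiniteMeasure μ]
    (f : ℕ → X → ℂ) (hf : ∀ n, Measurable (f n)) (hb : ∀ n x, ‖f n x‖ ≤ 1)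
    (a l t c b T : ℕ) (S : ℝ)
    (hS : ∀ i < t, ∫ x, ‖blockSum f (a + i * l) l x‖ ^ 2 * ‖blockSum f c b x‖ ^ 4 ∂μ ≤ S)
    (h : ∀ i < t, ∀ i' < t, (i + T < i' ∨ i' + T < i) →
      ∫ x, blockSum f (a + i * l) l x * (starRingEnd ℂ) (blockSum f (a + i' * l) l x) *
      ((‖blockSum f c b x‖ ^ 4 : ℝ) : ℂ) ∂μ = 0) :
    ∫ x, ‖blockSum f a (l * t) x‖ ^ 2 * ‖blockSum f c b x‖ ^ 4 ∂μ ≤ (2 * T + 1) * t * S := by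
  have hi4 : ∀ i i' : ℕ, Integrable (fun x => blockSum f (a + i * l) l x *
      (starRingEnd ℂ) (blockSum f (a + i' * l) l x) * ((‖blockSum f c b x‖ ^ 4 : ℝ) : ℂ)) μ := by
    intro i i'
    refine (integrable_mixed μ f hf hb (a + i * l) l (a+i'*l) l c b 1 1 4).mono ?_ ?_
    · have hc : Measurable (starRingEnd ℂ) := Complex.continuous_conj.measurable
      have h1 := fun a l => blockSum_meas f hf a l
      apply Measurable.aestronglyMeasurable
      exact ((h1 _ _).mul (hc.comp (h1 _ _))).mul (Complex.measurable_ofReal.comp ((h1 c b).norm.pow_const 4))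
    · refine Filter.Eventually.of_forall fun x => ?_
      simp
  have e : ((∫ x, ‖blockSum f a (l * t) x‖ ^ 2 * ‖blockSum f c b x‖ ^ 4 ∂μ : ℝ) : ℂ) =
      ∑ i ∈ Finset.range t, ∑ i' ∈ Finset.range t,
        ∫ x, blockSum f (a + i * l) l x * (starRingEnd ℂ) (blockSum f (a + i' * l) l x) *
          ((‖blockSum f c b x‖ ^ 4 : ℝ) : ℂ) ∂μ := by
    rw [← integral_complex_ofReal]
    simp_rw [← integral_finsetSum _ fun i' _ => hi4 _ i']
    rw [← integral_finsetSum _ fun i _ => integrable_finsetSum _ fun i' _ => hi4 i i']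
    congr 1
    ext x
    simp only [← Finset.mul_sum, ← Finset.sum_mul]
    rw [← map_sum, ← blockSum_mul, Complex.mul_conj']
    push_cast
    rfl
  have hS0 : ∀ i < t, 0 ≤ S := fun i hi =>
    (integral_nonneg fun x => by positivity).trans (hS i hi)
  have hn : ∀ i ∈ Finset.range t, ∀ i' ∈ Finset.range t,
      ‖∫ x, blockSum f (a + i * l) l x * (starRingEnd ℂ) (blockSum f (a + i' * l) l x) *
          ((‖blockSum f c b x‖ ^ 4 : ℝ) : ℂ) ∂μ‖ ≤
        if i' ∈ Finset.Icc (i - T) (i + T) then S else 0 := by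
    intro i hi i' hi'
    simp only [Finset.mem_range] at hi hi'
    split_ifs with hm
    · refine (norm_integral_le_integral_norm _).trans ?_
      have : ∫ x, ‖blockSum f (a + i * l) l x * (starRingEnd ℂ) (blockSum f (a + i' * l) l x) *
          ((‖blockSum f c b x‖ ^ 4 : ℝ) : ℂ)‖ ∂μ ≤
          ∫ x, (1/2 : ℝ) * (‖blockSum f (a + i * l) l x‖ ^ 2 * ‖blockSum f c b x‖ ^ 4 +
            ‖blockSum f (a + i' * l) l x‖ ^ 2 * ‖blockSum f c b x‖ ^ 4) ∂μ := by
        refine integral_mono (hi4 i i').norm (((integrable_two μ f hf hb _ _ _ _ _ _).add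
          (integrable_two μ f hf hb _ _ _ _ _ _)).const_mul _) fun x => ?_
        simp only [norm_mul, RCLike.norm_conj, Complex.norm_real, norm_pow, norm_norm]
        have := sq_nonneg (‖blockSum f (a + i * l) l x‖ - ‖blockSum f (a + i' * l) l x‖)
        have h4 : 0 ≤ ‖blockSum f c b x‖ ^ 4 := by positivity
        nlinarith
      refine this.trans ?_
      rw [integral_const_mul, integral_add (integrable_two μ f hf hb _ _ _ _ _ _)
        (integrable_two μ f hf hb _ _ _ _ _ _)]
      linarith [hS i hi, hS i' hi']
    · rw [h i hi i' hi' (by simp at hm; omega)]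
      simp
  have hnn : 0 ≤ ∫ x, ‖blockSum f a (l * t) x‖ ^ 2 * ‖blockSum f c b x‖ ^ 4 ∂μ :=
    integral_nonneg fun x => by positivity
  calc _ = ‖((∫ x, ‖blockSum f a (l * t) x‖ ^ 2 * ‖blockSum f c b x‖ ^ 4 ∂μ : ℝ) : ℂ)‖ := by
        rw [Complex.norm_real, Real.norm_of_nonneg hnn]
    _ ≤ ∑ i ∈ Finset.range t, ∑ i' ∈ Finset.range t,
        if i' ∈ Finset.Icc (i - T) (i + T) then S else 0 := by
        rw [e]
        refine (norm_sum_le _ _).trans (Finset.sum_le_sum fun i hi => ?_)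
        exact (norm_sum_le _ _).trans (Finset.sum_le_sum fun i' hi' => hn i hi i' hi')
    _ ≤ ∑ i ∈ Finset.range t, (2 * T + 1) * S := by
        refine Finset.sum_le_sum fun i hi => ?_
        have hs := hS0 i (Finset.mem_range.1 hi)
        rw [Finset.sum_ite, Finset.sum_const_zero, add_zero, Finset.sum_const, nsmul_eq_mul]
        gcongr
        have h1 : (Finset.filter (fun i' => i' ∈ Finset.Icc (i - T) (i + T)) (Finset.range t)).card ≤
            (Finset.Icc (i-T) (i+T)).card := by
          apply Finset.card_le_card
          intro z hz
          exact (Finset.mem_filter.1 hz).2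
        rw [Nat.card_Icc] at h1
        have : (Finset.filter (fun i' => i' ∈ Finset.Icc (i - T) (i + T)) (Finset.range t)).card ≤ 2 * T + 1 := by omega
        exact_mod_cast this
    _ = _ := by simp; ring

lemma cs_int {X : Type*} [MeasurableSpace X] (μ : Measure X) [IsFiniteMeasure μ]
    (f : ℕ → X → ℂ) (hf : ∀ n, Measurable (f n)) (hb : ∀ n x, ‖f n x‖ ≤ 1)
    (a l c b : ℕ) :
    (∫ x, ‖blockSum f a l x‖ ^ 2 * ‖blockSum f c b x‖ ^ 4 ∂μ) ^ 2 ≤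
      (∫ x, ‖blockSum f c b x‖ ^ 2 * ‖blockSum f a l x‖ ^ 4 ∂μ) *
      (∫ x, ‖blockSum f c b x‖ ^ 6 ∂μ) := by
  set I := ∫ x, ‖blockSum f a l x‖ ^ 2 * ‖blockSum f c b x‖ ^ 4 ∂μ
  set P := ∫ x, ‖blockSum f c b x‖ ^ 2 * ‖blockSum f a l x‖ ^ 4 ∂μ
  set Q := ∫ x, ‖blockSum f c b x‖ ^ 6 ∂μ
  have h : ∀ t : ℝ, 0 ≤ P * (t * t) + (-2 * I) * t + Q := by
    intro t
    have : P * (t * t) + (-2 * I) * t + Q = ∫ x, ((t*t) * (‖blockSum f c b x‖ ^ 2 * ‖blockSum f a l x‖ ^ 4)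
        + (-2 * t) * (‖blockSum f a l x‖ ^ 2 * ‖blockSum f c b x‖ ^ 4) + ‖blockSum f c b x‖ ^ 6) ∂μ := by
      have h1 := (integrable_two μ f hf hb c b a l 2 4).const_mul (t*t)
      have h2 := (integrable_two μ f hf hb a l c b 2 4).const_mul (-2*t)
      have h3 := integrable_one μ f hf hb c b 6
      have h12 : Integrable (fun x => (t*t) * (‖blockSum f c b x‖ ^ 2 * ‖blockSum f a l x‖ ^ 4)
        + (-2 * t) * (‖blockSum f a l x‖ ^ 2 * ‖blockSum f c b x‖ ^ 4)) μ := h1.add h2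
      rw [integral_add h12 h3, integral_add h1 h2, integral_const_mul, integral_const_mul]
      ring
    rw [this]
    refine integral_nonneg fun x => ?_
    have : (t*t) * (‖blockSum f c b x‖ ^ 2 * ‖blockSum f a l x‖ ^ 4)
        + (-2 * t) * (‖blockSum f a l x‖ ^ 2 * ‖blockSum f c b x‖ ^ 4) + ‖blockSum f c b x‖ ^ 6 =
        (‖blockSum f c b x‖ * (t * ‖blockSum f a l x‖ ^ 2 - ‖blockSum f c b x‖ ^ 2)) ^ 2 := by ring
    show 0 ≤ _
    rw [this]; positivity
  have := discrim_le_zero h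
  unfold discrim at this
  nlinarith

/-- Orthogonality hypothesis for separated configurations. -/
def SepOrth {X : Type*} [MeasurableSpace X] (μ : Measure X) (f : ℕ → X → ℂ) (M Hm : ℕ) (C : ℝ) :
    Prop :=
  ∀ b d n n' m₁ m₂ m₃ m₄ : ℕ, M ≤ b → b ≤ Hm → 0 < d →
    m₂ < m₁ + b → m₁ < m₂ + b → m₃ < m₁ + b → m₁ < m₃ + b → m₄ < m₁ + b → m₁ < m₄ + b →
    ((m₁ + d ≤ n ∧ m₁ + d ≤ n') ∨ (n + d ≤ m₁ ∧ n' + d ≤ m₁)) →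
    n < m₁ + Hm → m₁ < n + Hm → n' < m₁ + Hm → m₁ < n' + Hm →
    C * (b:ℝ) ^ 2 < d * |(n:ℝ) - n'| →
    ∫ x, f n x * (starRingEnd ℂ) (f n' x) * (f m₁ x * f m₂ x * (starRingEnd ℂ) (f m₃ x)
        * (starRingEnd ℂ) (f m₄ x)) ∂μ = 0

lemma amgm_aux (x y A B : ℝ) (hA : 0 < A) (hB : 0 < B) :
    x ^ 2 * y ^ 4 ≤ A * B ^ 2 / 3 * (1 / A ^ 3 * x ^ 6 + 2 / B ^ 3 * y ^ 6) := by
  have h : ∀ X Y : ℝ, 0 ≤ X → 0 ≤ Y → X * Y ^ 2 ≤ 1 / 3 * (X ^ 3 + 2 * Y ^ 3) := by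
    intro X Y hX hY
    nlinarith [mul_nonneg hX (sq_nonneg (X - Y)), mul_nonneg hY (sq_nonneg (X - Y))]
  have h1 := h (x ^ 2 / A) (y ^ 2 / B) (by positivity) (by positivity)
  have h2 := mul_le_mul_of_nonneg_left h1 (show 0 ≤ A * B ^ 2 by positivity)
  calc x ^ 2 * y ^ 4 = A * B ^ 2 * (x ^ 2 / A * (y ^ 2 / B) ^ 2) := by field_simp
    _ ≤ _ := h2
    _ = _ := by field_simp

set_option maxHeartbeats 1000000 in
lemma mixed_bound {X : Type*} [MeasurableSpace X] (μ : Measure X) [IsFiniteMeasure μ]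
    (f : ℕ → X → ℂ) (hf : ∀ n, Measurable (f n)) (hb : ∀ n x, ‖f n x‖ ≤ 1)
    (M Hm r p : ℕ) (C u K : ℝ) (hM : 1 ≤ M) (hr : 3 ≤ r) (hC : C ≤ r) (hu : 1 ≤ u) (hK : 0 ≤ K)
    (hp : M * r ^ p ≤ Hm) (ho : SepOrth μ f M Hm C)
    (hV : ∀ q < p, ∀ a, ∫ x, ‖blockSum f a (M * r ^ q) x‖ ^ 6 ∂μ ≤
      K * ((M * r ^ q : ℕ) : ℝ) ^ 3 * u ^ (2 * q)) :
    ∀ m σ τ : ℕ, 1 ≤ σ → σ ≤ 2 * τ → 1 ≤ τ → 2 ^ m * τ ≤ p → σ ≤ p →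
    ∀ a c s : ℕ, s ≤ a → a + M * r ^ (p - σ) ≤ s + M * r ^ p → s ≤ c →
      c + M * r ^ (p - τ) ≤ s + M * r ^ p →
      (a + M * r ^ (p - σ) + M * r ^ (p - 1) ≤ c ∨ c + M * r ^ (p - τ) + M * r ^ (p - 1) ≤ a) →
      ∫ x, ‖blockSum f a (M * r ^ (p - σ)) x‖ ^ 2 * ‖blockSum f c (M * r ^ (p - τ)) x‖ ^ 4 ∂μ ≤
        ((M * r ^ (p - σ) : ℕ) : ℝ) * ((M * r ^ (p - τ) : ℕ) : ℝ) ^ 2 *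
          (K * u ^ (2 * p) * r ^ 6 / u ^ (τ * m)) := by
  have hr0 : 0 < r := by omega
  have hu0 : 0 < u := by linarith
  have hpos : ∀ q, 0 < M * r ^ q := fun q => by positivity
  have hr1 : (1:ℝ) ≤ r := by exact_mod_cast hr0
  intro m
  induction m with
  | zero =>
    intro σ τ hσ hστ hτ hm hσp a c s _ _ _ _ _
    have hτp : τ ≤ p := by simpa using hm
    set A : ℝ := ((M * r ^ (p - σ) : ℕ) : ℝ) with hA
    set B : ℝ := ((M * r ^ (p - τ) : ℕ) : ℝ) with hB
    have hA0 : 0 < A := by rw [hA]; exact_mod_cast hpos _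
    have hB0 : 0 < B := by rw [hB]; exact_mod_cast hpos _
    have i1 := (integrable_one μ f hf hb a (M * r ^ (p - σ)) 6).const_mul (1 / A ^ 3)
    have i2 := (integrable_one μ f hf hb c (M * r ^ (p - τ)) 6).const_mul (2 / B ^ 3)
    have h1 : ∫ x, ‖blockSum f a (M * r ^ (p - σ)) x‖ ^ 2 *
        ‖blockSum f c (M * r ^ (p - τ)) x‖ ^ 4 ∂μ ≤
        ∫ x, A * B ^ 2 / 3 * (1 / A ^ 3 * ‖blockSum f a (M * r ^ (p - σ)) x‖ ^ 6 +
          2 / B ^ 3 * ‖blockSum f c (M * r ^ (p - τ)) x‖ ^ 6) ∂μ :=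
      integral_mono (integrable_two μ f hf hb _ _ _ _ _ _) ((i1.add i2).const_mul _)
        fun x => amgm_aux _ _ A B hA0 hB0
    refine h1.trans ?_
    rw [integral_const_mul, integral_add i1 i2, integral_const_mul, integral_const_mul]
    have v1 := hV (p - σ) (by omega) a
    have v2 := hV (p - τ) (by omega) c
    rw [← hA] at v1
    rw [← hB] at v2
    have u1 : u ^ (2 * (p - σ)) ≤ u ^ (2 * p) := pow_le_pow_right₀ hu (by omega)
    have u2 : u ^ (2 * (p - τ)) ≤ u ^ (2 * p) := pow_le_pow_right₀ hu (by omega)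
    calc _ ≤ A * B ^ 2 / 3 * (1 / A ^ 3 * (K * A ^ 3 * u ^ (2 * p)) +
          2 / B ^ 3 * (K * B ^ 3 * u ^ (2 * p))) := by
          gcongr
          · exact v1.trans (by gcongr)
          · exact v2.trans (by gcongr)
      _ = A * B ^ 2 * (K * u ^ (2 * p)) := by field_simp; ring
      _ ≤ _ := by
          have : (1:ℝ) ≤ r ^ 6 := one_le_pow₀ hr1
          simp only [mul_zero, pow_zero, div_one]
          exact mul_le_mul_of_nonneg_left (le_mul_of_one_le_right (by positivity) this)
            (by positivity)
  | succ m ih =>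
    intro σ τ hσ hστ hτ hm hσp a c s hsa has hsc hcs hsep
    have hm' : 2 ^ m * (2 * τ) ≤ p := by rw [pow_succ] at hm; linarith
    have h2p : 2 * τ ≤ p := le_trans (Nat.le_mul_of_pos_left _ (by positivity)) hm'
    obtain ⟨w, hw⟩ : ∃ w, p = 2 * τ + w := ⟨p - 2 * τ, by omega⟩
    obtain ⟨e, he⟩ : ∃ e, 2 * τ = σ + e := ⟨2 * τ - σ, by omega⟩
    have e1 : p - σ = w + e := by omega
    have e2 : p - τ = w + τ := by omega
    have e3 : p - 2 * τ = w := by omega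
    set l := M * r ^ w with hl
    set b := M * r ^ (p - τ) with hb'
    have hlA : M * r ^ (p - σ) = l * r ^ e := by rw [e1, hl, pow_add]; ring
    have hl0 : 0 < l := hpos w
    have hb0 : 0 < b := hpos _
    rw [hlA] at has hsep ⊢
    set S : ℝ := l * (b:ℝ) ^ 2 * (K * u ^ (2 * p) * r ^ 3 / u ^ (τ * (m + 1))) with hS
    have hSn : 0 ≤ S := by positivity
    have hre : 1 ≤ r ^ e := Nat.one_le_pow _ _ hr0
    have hble : b ≤ M * r ^ p := Nat.mul_le_mul_left _ (Nat.pow_le_pow_right hr0 (by omega))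
    have hMb : M ≤ b := Nat.le_mul_of_pos_right _ (by positivity)
    have hbd : (b:ℝ) ^ 2 = r * (M * r ^ (p - 1) : ℕ) * l := by
      have : b ^ 2 = r * (M * r ^ (p - 1)) * l := by
        obtain ⟨p', rfl⟩ : ∃ p', p = p' + 1 := ⟨p - 1, by omega⟩
        have : (w + τ) * 2 = 1 + p' + w := by omega
        rw [hb', hl, e2, mul_pow, ← pow_mul, this, pow_add, pow_add]
        simp only [Nat.add_sub_cancel]; ring
      exact_mod_cast this
    have hblk : ∀ i < r ^ e, i * l + l ≤ l * r ^ e := by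
      intro i hi
      calc i * l + l = l * (i + 1) := by ring
        _ ≤ _ := Nat.mul_le_mul_left _ hi
    have key := key_step μ f hf hb a l (r ^ e) c b (r ^ 2) S ?_ ?_
    · refine key.trans ?_
      have hr3 : (2 * ((r ^ 2 : ℕ) : ℝ) + 1) ≤ r ^ 3 := by
        have : (3:ℝ) ≤ r := by exact_mod_cast hr
        push_cast
        nlinarith [sq_nonneg ((r:ℝ) - 1)]
      calc (2 * ((r ^ 2 : ℕ) : ℝ) + 1) * ((r ^ e : ℕ) : ℝ) * S ≤ r ^ 3 * ((r ^ e : ℕ) : ℝ) * S := by gcongr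
        _ = _ := by rw [hS]; push_cast; ring
    · intro i hi
      have hbi := hblk i hi
      have h1 := ih τ (2 * τ) hτ (by omega) (by omega) hm' (by omega) c (a + i * l) s hsc hcs
        (by omega) (by rw [e3]; omega) (by rw [e3]; omega)
      rw [e3] at h1
      have cs := cs_int μ f hf hb (a + i * l) l c b
      have hv := hV (p - τ) (by omega) c
      refine abs_le_of_sq_le_sq' ?_ hSn |>.2
      refine cs.trans ?_
      refine (mul_le_mul h1 hv (integral_nonneg fun x => by positivity) (by positivity)).trans ?_
      apply le_of_eq
      have hu2 : u ^ (2 * p) = u ^ (2 * (p - τ)) * u ^ (2 * τ) := by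
        rw [← pow_add]; congr 1; omega
      rw [hS, hu2]
      field_simp
      ring
    · intro i hi i' hi' hfar
      have hbi := hblk i hi
      have hbi' := hblk i' hi'
      apply far_zero μ f hf hb
      intro n n' m₁ m₂ m₃ m₄ g1 g2 g3 g4 g5 g6 g7 g8 g9 g10 g11 g12
      have hdist : ((r ^ 2 * l : ℕ) : ℝ) < |(n:ℝ) - n'| := by
        rcases hfar with hfar | hfar
        · have : (i + r ^ 2 + 1) * l ≤ i' * l := Nat.mul_le_mul_right _ hfar
          have : n + r ^ 2 * l < n' := by simp only [add_mul, one_mul] at this; omega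
          have : (n:ℝ) + (r ^ 2 * l : ℕ) < n' := by exact_mod_cast this
          rw [abs_sub_comm]
          exact lt_of_lt_of_le (by linarith) (le_abs_self _)
        · have : (i' + r ^ 2 + 1) * l ≤ i * l := Nat.mul_le_mul_right _ hfar
          have : n' + r ^ 2 * l < n := by simp only [add_mul, one_mul] at this; omega
          have : (n':ℝ) + (r ^ 2 * l : ℕ) < n := by exact_mod_cast this
          exact lt_of_lt_of_le (by linarith) (le_abs_self _)
      have hd0 := hpos (p - 1)
      refine ho b (M * r ^ (p - 1)) n n' m₁ m₂ m₃ m₄ hMb (hble.trans hp) hd0 (by omega) (by omega)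
        (by omega) (by omega) (by omega) (by omega) (by omega) (by omega) (by omega) (by omega)
        (by omega) ?_
      rw [hbd]
      have hd0' : (0:ℝ) < (M * r ^ (p - 1) : ℕ) := by exact_mod_cast hd0
      calc C * (r * (M * r ^ (p - 1) : ℕ) * l) ≤ r * (r * (M * r ^ (p - 1) : ℕ) * l) := by gcongr
        _ = (M * r ^ (p - 1) : ℕ) * ((r ^ 2 * l : ℕ) : ℝ) := by push_cast; ring
        _ < _ := by gcongr

lemma sum_pow_six_le (s : Finset ℕ) (r : ℕ) (hs : s.card ≤ r) (a : ℕ → ℝ) (ha : ∀ i, 0 ≤ a i) :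
    (∑ i ∈ s, a i) ^ 6 ≤ (r:ℝ) ^ 5 * ∑ i ∈ s, a i ^ 6 := by
  rcases s.eq_empty_or_nonempty with rfl | hne
  · simp
  have h1 := pow_sum_div_card_le_sum_pow (s := s) (f := a) (fun i _ => ha i) 5
  have hc : (0:ℝ) < s.card := by exact_mod_cast hne.card_pos
  rw [div_le_iff₀ (by positivity)] at h1
  refine h1.trans ?_
  rw [mul_comm]
  have : 0 ≤ ∑ i ∈ s, a i ^ 6 := Finset.sum_nonneg fun i _ => by have := ha i; positivity
  gcongr
  

lemma broad_narrow (r : ℕ) (a : ℕ → ℝ) (ha : ∀ i, 0 ≤ a i) :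
    (∑ i ∈ Finset.range r, a i) ^ 6 ≤ 23328 * ∑ i ∈ Finset.range r, a i ^ 6 +
      32 * (r:ℝ) ^ 5 * ∑ j ∈ Finset.range r, ∑ i ∈ Finset.range r,
        if (i + 2 ≤ j ∨ j + 2 ≤ i) then a i ^ 2 * a j ^ 4 else 0 := by
  rcases Nat.eq_zero_or_pos r with rfl | hr
  · simp
  obtain ⟨j, hj, hmax⟩ := Finset.exists_max_image (Finset.range r) a ⟨0, by simpa using hr⟩
  have hsplit := Finset.sum_filter_add_sum_filter_not (Finset.range r)
    (fun i => i + 2 ≤ j ∨ j + 2 ≤ i) a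
  set P := ∑ i ∈ Finset.range r with (i + 2 ≤ j ∨ j + 2 ≤ i), a i with hP
  set Q := ∑ i ∈ Finset.range r with ¬ (i + 2 ≤ j ∨ j + 2 ≤ i), a i with hQ
  have hP0 : 0 ≤ P := Finset.sum_nonneg fun i _ => ha i
  have hQ0 : 0 ≤ Q := Finset.sum_nonneg fun i _ => ha i
  have hQ1 : Q ≤ 3 * a j := by
    have h1 : Q ≤ ∑ i ∈ Finset.range r with ¬ (i + 2 ≤ j ∨ j + 2 ≤ i), a j :=
      Finset.sum_le_sum fun i hi => hmax i (Finset.mem_filter.1 hi).1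
    rw [Finset.sum_const, nsmul_eq_mul] at h1
    refine h1.trans (mul_le_mul_of_nonneg_right ?_ (ha j))
    have : (Finset.filter (fun i => ¬ (i + 2 ≤ j ∨ j + 2 ≤ i)) (Finset.range r)).card ≤
        (Finset.Icc (j - 1) (j + 1)).card := by
      apply Finset.card_le_card
      intro z hz
      have := (Finset.mem_filter.1 hz).2
      simp only [Finset.mem_Icc]
      omega
    rw [Nat.card_Icc] at this
    have : (Finset.filter (fun i => ¬ (i + 2 ≤ j ∨ j + 2 ≤ i)) (Finset.range r)).card ≤ 3 := by omega
    exact_mod_cast this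
  have hP1 : P ^ 6 ≤ (r:ℝ) ^ 5 * ∑ i ∈ Finset.range r,
      if (i + 2 ≤ j ∨ j + 2 ≤ i) then a i ^ 2 * a j ^ 4 else 0 := by
    refine (sum_pow_six_le _ r ((Finset.card_filter_le _ _).trans (by simp)) a ha).trans ?_
    rw [← Finset.sum_filter]
    gcongr with i hi
    have h1 := hmax i (Finset.mem_filter.1 hi).1
    calc a i ^ 6 = a i ^ 2 * a i ^ 4 := by ring
      _ ≤ _ := by have := ha i; gcongr
  have hle : ∑ i ∈ Finset.range r, (if (i + 2 ≤ j ∨ j + 2 ≤ i) then a i ^ 2 * a j ^ 4 else 0) ≤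
      ∑ j ∈ Finset.range r, ∑ i ∈ Finset.range r,
        if (i + 2 ≤ j ∨ j + 2 ≤ i) then a i ^ 2 * a j ^ 4 else 0 :=
    Finset.single_le_sum (f := fun j => ∑ i ∈ Finset.range r,
        if (i + 2 ≤ j ∨ j + 2 ≤ i) then a i ^ 2 * a j ^ 4 else 0)
      (fun j _ => Finset.sum_nonneg fun i _ => by split_ifs <;> positivity) hj
  have hj6 : a j ^ 6 ≤ ∑ i ∈ Finset.range r, a i ^ 6 :=
    Finset.single_le_sum (f := fun i => a i ^ 6) (fun i _ => by have := ha i; positivity) hj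
  rw [← hsplit]
  have h2 := add_pow_le hP0 hQ0 6
  have hQ6 : Q ^ 6 ≤ (3 * a j) ^ 6 := by gcongr
  calc (P + Q) ^ 6 ≤ 32 * (P ^ 6 + Q ^ 6) := by norm_num at h2; exact h2
    _ ≤ 32 * ((r:ℝ) ^ 5 * (∑ j ∈ Finset.range r, ∑ i ∈ Finset.range r,
        if (i + 2 ≤ j ∨ j + 2 ≤ i) then a i ^ 2 * a j ^ 4 else 0) + 729 * ∑ i ∈ Finset.range r, a i ^ 6) := by
        gcongr
        · exact hP1.trans (by gcongr)
        · refine hQ6.trans ?_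
          rw [mul_pow]; norm_num; exact hj6
    _ = _ := by ring

lemma crude_step {X : Type*} [MeasurableSpace X] (μ : Measure X) [IsFiniteMeasure μ]
    (f : ℕ → X → ℂ) (hf : ∀ n, Measurable (f n)) (hb : ∀ n x, ‖f n x‖ ≤ 1)
    (l r : ℕ) (V : ℝ) (hV : ∀ a, ∫ x, ‖blockSum f a l x‖ ^ 6 ∂μ ≤ V) (a : ℕ) :
    ∫ x, ‖blockSum f a (l * r) x‖ ^ 6 ∂μ ≤ (r:ℝ) ^ 6 * V := by
  have hi := fun i : ℕ => integrable_one μ f hf hb (a + i * l) l 6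
  calc _ ≤ ∫ x, (r:ℝ) ^ 5 * ∑ i ∈ Finset.range r, ‖blockSum f (a + i * l) l x‖ ^ 6 ∂μ := by
        refine integral_mono (integrable_one μ f hf hb _ _ _)
          ((integrable_finsetSum _ fun i _ => hi i).const_mul _) fun x => ?_
        simp only [blockSum_mul]
        refine le_trans ?_ (sum_pow_six_le (Finset.range r) r (by simp) _ (fun i => norm_nonneg _))
        gcongr
        exact norm_sum_le _ _
    _ = (r:ℝ) ^ 5 * ∑ i ∈ Finset.range r, ∫ x, ‖blockSum f (a + i * l) l x‖ ^ 6 ∂μ := by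
        rw [integral_const_mul, integral_finsetSum _ fun i _ => hi i]
    _ ≤ (r:ℝ) ^ 5 * ∑ i ∈ Finset.range r, V := by gcongr; exact hV _
    _ = _ := by simp; ring

lemma broad_step {X : Type*} [MeasurableSpace X] (μ : Measure X) [IsFiniteMeasure μ]
    (f : ℕ → X → ℂ) (hf : ∀ n, Measurable (f n)) (hb : ∀ n x, ‖f n x‖ ≤ 1)
    (l r : ℕ) (V I : ℝ) (a : ℕ) (hV : ∀ a, ∫ x, ‖blockSum f a l x‖ ^ 6 ∂μ ≤ V) (hI0 : 0 ≤ I)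
    (hI : ∀ i < r, ∀ j < r, (i + 2 ≤ j ∨ j + 2 ≤ i) →
      ∫ x, ‖blockSum f (a + i * l) l x‖ ^ 2 * ‖blockSum f (a + j * l) l x‖ ^ 4 ∂μ ≤ I) :
    ∫ x, ‖blockSum f a (l * r) x‖ ^ 6 ∂μ ≤ 23328 * r * V + 32 * (r:ℝ) ^ 7 * I := by
  have hi := fun i : ℕ => integrable_one μ f hf hb (a + i * l) l 6
  have hij : ∀ j i : ℕ, Integrable (fun x => if (i + 2 ≤ j ∨ j + 2 ≤ i) then
      ‖blockSum f (a + i * l) l x‖ ^ 2 * ‖blockSum f (a + j * l) l x‖ ^ 4 else 0) μ := by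
    intro j i
    split_ifs
    · exact integrable_two μ f hf hb _ _ _ _ _ _
    · exact integrable_zero _ _ _
  have i1 := (integrable_finsetSum (Finset.range r) fun i _ => hi i).const_mul 23328
  have i2 := (integrable_finsetSum (Finset.range r) fun j _ =>
    integrable_finsetSum (Finset.range r) fun i _ => hij j i).const_mul (32 * (r:ℝ) ^ 5)
  calc _ ≤ ∫ x, (23328 * ∑ i ∈ Finset.range r, ‖blockSum f (a + i * l) l x‖ ^ 6 +
      32 * (r:ℝ) ^ 5 * ∑ j ∈ Finset.range r, ∑ i ∈ Finset.range r,
        if (i + 2 ≤ j ∨ j + 2 ≤ i) then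
      ‖blockSum f (a + i * l) l x‖ ^ 2 * ‖blockSum f (a + j * l) l x‖ ^ 4 else 0) ∂μ := by
        refine integral_mono (integrable_one μ f hf hb _ _ _) (i1.add i2) fun x => ?_
        simp only [blockSum_mul]
        refine le_trans ?_ (broad_narrow r (fun i => ‖blockSum f (a + i * l) l x‖)
          (fun i => norm_nonneg _))
        gcongr
        exact norm_sum_le _ _
    _ = 23328 * ∑ i ∈ Finset.range r, ∫ x, ‖blockSum f (a + i * l) l x‖ ^ 6 ∂μ +
      32 * (r:ℝ) ^ 5 * ∑ j ∈ Finset.range r, ∑ i ∈ Finset.range r,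
        ∫ x, (if (i + 2 ≤ j ∨ j + 2 ≤ i) then
      ‖blockSum f (a + i * l) l x‖ ^ 2 * ‖blockSum f (a + j * l) l x‖ ^ 4 else 0) ∂μ := by
        rw [integral_add i1 i2, integral_const_mul, integral_const_mul,
          integral_finsetSum _ fun i _ => hi i,
          integral_finsetSum _ fun j _ => integrable_finsetSum (Finset.range r) fun i _ => hij j i]
        congr 2
        refine Finset.sum_congr rfl fun j _ => ?_
        rw [integral_finsetSum _ fun i _ => hij j i]
    _ ≤ 23328 * ∑ i ∈ Finset.range r, V + 32 * (r:ℝ) ^ 5 * ∑ j ∈ Finset.range r, ∑ i ∈ Finset.range r, I := by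
        gcongr with i _ j hj i hi
        · exact hV _
        · by_cases h : (i + 2 ≤ j ∨ j + 2 ≤ i)
          · simp only [h, if_true]
            exact hI i (Finset.mem_range.1 hi) j (Finset.mem_range.1 hj) h
          · simpa only [h, if_false, integral_zero] using hI0
    _ = _ := by simp; ring

theorem abstract_sixth {X : Type*} [MeasurableSpace X] (μ : Measure X) [IsFiniteMeasure μ]
    (f : ℕ → X → ℂ) (hf : ∀ n, Measurable (f n)) (hb : ∀ n x, ‖f n x‖ ≤ 1)
    (M Hm r m : ℕ) (C u V : ℝ) (hM : 1 ≤ M) (hr : 160 ≤ r) (hC : C ≤ r) (hu : 1 ≤ u)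
    (hum : (r:ℝ) ^ 13 ≤ u ^ m)
    (ho : SepOrth μ f M Hm C)
    (hV : ∀ a, ∫ x, ‖blockSum f a M x‖ ^ 6 ∂μ ≤ V) :
    ∀ p : ℕ, M * r ^ p ≤ Hm → ∀ a, ∫ x, ‖blockSum f a (M * r ^ p) x‖ ^ 6 ∂μ ≤
      ((r:ℝ) ^ (3 * 2 ^ m) * V / (M:ℝ) ^ 3) * ((M * r ^ p : ℕ) : ℝ) ^ 3 * u ^ (2 * p) := by
  have hV0 : 0 ≤ V := (integral_nonneg fun x => by positivity).trans (hV 0)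
  have hr0 : 0 < r := by omega
  have hM0 : (0:ℝ) < M := by exact_mod_cast hM
  have hr160 : (160:ℝ) ≤ r := by exact_mod_cast hr
  have hrR : (1:ℝ) ≤ r := by linarith
  have hcrude : ∀ p a, ∫ x, ‖blockSum f a (M * r ^ p) x‖ ^ 6 ∂μ ≤ (r:ℝ) ^ (6 * p) * V := by
    intro p
    induction p with
    | zero => simpa using hV
    | succ p ih =>
      intro a
      have := crude_step μ f hf hb (M * r ^ p) r _ ih a
      rw [pow_succ, ← mul_assoc]
      refine this.trans (le_of_eq ?_)
      ring
  set K := (r:ℝ) ^ (3 * 2 ^ m) * V / (M:ℝ) ^ 3 with hK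
  have hK0 : 0 ≤ K := by positivity
  intro p
  induction p using Nat.strong_induction_on with
  | _ p ih =>
  intro hp a
  rcases lt_or_ge p (2 ^ m) with hlt | hge
  · refine (hcrude p a).trans ?_
    have h1 : (1:ℝ) ≤ u ^ (2 * p) := one_le_pow₀ hu
    have h2 : (r:ℝ) ^ (3 * p) ≤ r ^ (3 * 2 ^ m) := pow_le_pow_right₀ hrR (by omega)
    calc (r:ℝ) ^ (6 * p) * V = ((r:ℝ) ^ (3 * p) * V / (M:ℝ) ^ 3) * ((M * r ^ p : ℕ) : ℝ) ^ 3 * 1 := by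
          push_cast
          field_simp
          ring
      _ ≤ _ := by rw [hK]; gcongr
  · have hp1 : 1 ≤ p := le_trans Nat.one_le_two_pow hge
    obtain ⟨q, rfl⟩ : ∃ q, p = q + 1 := ⟨p - 1, by omega⟩
    have hmono : ∀ t < q + 1, M * r ^ t ≤ Hm := fun t ht =>
      (Nat.mul_le_mul_left _ (Nat.pow_le_pow_right hr0 ht.le)).trans hp
    have hV' : ∀ t < q + 1, ∀ a, ∫ x, ‖blockSum f a (M * r ^ t) x‖ ^ 6 ∂μ ≤
      K * ((M * r ^ t : ℕ) : ℝ) ^ 3 * u ^ (2 * t) := fun t ht => ih t ht (hmono t ht)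
    have hmix := mixed_bound μ f hf hb M Hm r (q + 1) C u K hM (by omega) hC hu hK0 hp ho hV'
      m 1 1 le_rfl (by omega) le_rfl (by omega) (by omega)
    simp only [Nat.add_sub_cancel, one_mul] at hmix
    set l := M * r ^ q with hl
    have hlr : M * r ^ (q + 1) = l * r := by rw [hl, pow_succ]; ring
    rw [hlr] at hmix ⊢
    have hu0 : 0 < u := by linarith
    have key := broad_step μ f hf hb l r (K * (l:ℝ) ^ 3 * u ^ (2 * q))
      ((l:ℝ) * (l:ℝ) ^ 2 * (K * u ^ (2 * (q + 1)) * r ^ 6 / u ^ m)) a (hV' q (by omega))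
      (by positivity) ?_
    · refine key.trans ?_
      have h1 : u ^ (2 * q) ≤ u ^ (2 * (q+1)) := pow_le_pow_right₀ hu (by omega)
      have h2 : K * u ^ (2 * (q + 1)) * r ^ 6 / u ^ m ≤ K * u ^ (2 * (q + 1)) * r ^ 6 / (r:ℝ) ^ 13 := by
        gcongr
      calc _ ≤ 23328 * r * (K * (l:ℝ) ^ 3 * u ^ (2 * (q+1))) + 32 * (r:ℝ) ^ 7 *
          ((l:ℝ) * (l:ℝ) ^ 2 * (K * u ^ (2 * (q + 1)) * r ^ 6 / (r:ℝ) ^ 13)) := by gcongr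
        _ = (23328 * r + 32) * (K * (l:ℝ) ^ 3 * u ^ (2 * (q+1))) := by
          field_simp
        _ ≤ (r:ℝ) ^ 3 * (K * (l:ℝ) ^ 3 * u ^ (2 * (q+1))) := by
          gcongr
          have h5 : (160:ℝ) ^ 2 ≤ (r:ℝ) ^ 2 := by gcongr
          have h6 : (160:ℝ) ^ 2 * r ≤ (r:ℝ) ^ 2 * r := by gcongr
          nlinarith
        _ = _ := by push_cast; ring
    · intro i hi j hj hij
      have hbi : i * l + l ≤ l * r := by
        calc i * l + l = l * (i + 1) := by ring
          _ ≤ _ := Nat.mul_le_mul_left _ hi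
      have hbj : j * l + l ≤ l * r := by
        calc j * l + l = l * (j + 1) := by ring
          _ ≤ _ := Nat.mul_le_mul_left _ hj
      refine hmix (a + i * l) (a + j * l) a (by omega) (by omega) (by omega) (by omega) ?_
      rcases hij with h | h
      · left
        have := Nat.mul_le_mul_right l h
        simp only [add_mul] at this
        omega
      · right
        have := Nat.mul_le_mul_right l h
        simp only [add_mul] at this
        omega

lemma small_scale_aux (N H b d n n' m₁ m₂ m₃ m₄ : ℤ) (hN : 1 ≤ N) (hm : N ≤ m₁) (hd : 0 < d)
    (hH : 3 * (H - 1) ^ 2 < 2 * N) (hbH : b ≤ H)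
    (h2 : m₂ < m₁ + b) (h2' : m₁ < m₂ + b) (h3 : m₃ < m₁ + b) (h3' : m₁ < m₃ + b)
    (h4 : m₄ < m₁ + b) (h4' : m₁ < m₄ + b)
    (hs : (m₁ + d ≤ n ∧ m₁ + d ≤ n') ∨ (n + d ≤ m₁ ∧ n' + d ≤ m₁))
    (k1 : n < m₁ + H) (k1' : m₁ < n + H) (k2 : n' < m₁ + H) (k2' : m₁ < n' + H)
    (hA : n ^ 2 - n' ^ 2 + m₁ ^ 2 + m₂ ^ 2 - m₃ ^ 2 - m₄ ^ 2 = 0) :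
    d * |n - n'| ≤ b ^ 2 := by
  obtain ⟨h, rfl⟩ : ∃ h, n = m₁ + h := ⟨n - m₁, by ring⟩
  obtain ⟨h', rfl⟩ : ∃ h', n' = m₁ + h' := ⟨n' - m₁, by ring⟩
  obtain ⟨a₂, rfl⟩ : ∃ a, m₂ = m₁ + a := ⟨m₂ - m₁, by ring⟩
  obtain ⟨a₃, rfl⟩ : ∃ a, m₃ = m₁ + a := ⟨m₃ - m₁, by ring⟩
  obtain ⟨a₄, rfl⟩ : ∃ a, m₄ = m₁ + a := ⟨m₄ - m₁, by ring⟩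
  have sqb : ∀ z B : ℤ, -B ≤ z → z ≤ B → z ^ 2 ≤ B ^ 2 := fun z B u v => by nlinarith
  have q1 := sqb h (H-1) (by omega) (by omega)
  have q2 := sqb h' (H-1) (by omega) (by omega)
  have q3 := sqb a₂ (H-1) (by omega) (by omega)
  have q4 := sqb a₃ (H-1) (by omega) (by omega)
  have q5 := sqb a₄ (H-1) (by omega) (by omega)
  have p3 := sqb a₂ b (by omega) (by omega)
  have p4 := sqb a₃ b (by omega) (by omega)
  have p5 := sqb a₄ b (by omega) (by omega)
  obtain ⟨j, hj⟩ : ∃ j, j = h - h' + a₂ - a₃ - a₄ := ⟨_, rfl⟩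
  have e : 2 * m₁ * j + (h ^ 2 - h' ^ 2 + a₂ ^ 2 - a₃ ^ 2 - a₄ ^ 2) = 0 := by
    rw [hj]; linear_combination hA
  have hj0 : j = 0 := by
    have s1 := sq_nonneg h
    have s2 := sq_nonneg h'
    have s3 := sq_nonneg a₂
    have s4 := sq_nonneg a₃
    have s5 := sq_nonneg a₄
    by_contra hne
    rcases lt_or_gt_of_ne hne with hlt | hgt
    · have : m₁ * j ≤ m₁ * (-1) := by apply mul_le_mul_of_nonneg_left <;> omega
      linarith
    · have : m₁ * 1 ≤ m₁ * j := by apply mul_le_mul_of_nonneg_left <;> omega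
      linarith
  rw [hj0] at e
  have e2 : (h - h') * (h + h') = a₃ ^ 2 + a₄ ^ 2 - a₂ ^ 2 := by linear_combination e
  have e3 : |h - h'| * |h + h'| ≤ 2 * b ^ 2 := by
    rw [← abs_mul, e2, abs_le]
    constructor <;> nlinarith [sq_nonneg a₂, sq_nonneg a₃, sq_nonneg a₄]
  have e4 : 2 * d ≤ |h + h'| := by
    rcases hs with ⟨u, v⟩ | ⟨u, v⟩
    · exact le_trans (by omega) (le_abs_self _)
    · exact le_trans (by omega) (neg_le_abs _)
  have e5 : m₁ + h - (m₁ + h') = h - h' := by ring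
  rw [e5]
  nlinarith [abs_nonneg (h - h')]

lemma pow_sub_lower (N t c : ℝ) (hN : 0 < N) (ht : N ≤ t) (hc : N ≤ c) (j : ℕ) :
    N ^ j * |t - c| ≤ |t ^ (j + 1) - c ^ (j + 1)| := by
  have main : ∀ t c : ℝ, N ≤ c → c ≤ t → N ^ j * (t - c) ≤ t ^ (j+1) - c ^ (j+1) := by
    intro t c hc hct
    have h1 : c ^ j ≤ t ^ j := by have : 0 ≤ c := by linarith
                                  gcongr
    have h2 : N ^ j ≤ t ^ j := by gcongr; linarith
    have h3 : t ^ (j+1) - c ^ (j+1) = t ^ j * (t - c) + c * (t ^ j - c ^ j) := by ring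
    rw [h3]
    nlinarith
  rcases le_total c t with h | h
  · rw [abs_of_nonneg (by linarith)]
    exact (main t c hc h).trans (le_abs_self _)
  · rw [abs_sub_comm, abs_sub_comm (t ^ (j+1)), abs_of_nonneg (by linarith)]
    exact (main c t ht h).trans (le_abs_self _)

/-- Auxiliary function with vanishing derivative at `c`. -/
def gaux (j : ℕ) (c t : ℝ) : ℝ := 2 * t ^ (j + 3) - (j + 3 : ℕ) * c ^ (j + 1) * t ^ 2

lemma gaux_deriv (j : ℕ) (c t : ℝ) :
    HasDerivAt (gaux j c) (2 * (j + 3 : ℕ) * t * (t ^ (j + 1) - c ^ (j + 1))) t := by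
  have h1 := ((hasDerivAt_pow (j+3) t).const_mul 2).sub
    ((hasDerivAt_pow 2 t).const_mul ((j + 3 : ℕ) * c ^ (j + 1)))
  have e : 2 * (j + 3 : ℕ) * t * (t ^ (j + 1) - c ^ (j + 1))
      = 2 * (((j + 3 : ℕ) : ℝ) * t ^ (j + 2)) - (j + 3 : ℕ) * c ^ (j + 1) * (((2:ℕ):ℝ) * t ^ (2 - 1)) := by
    push_cast
    ring
  rw [e]
  exact h1

lemma gaux_mvt (j : ℕ) (c s t : ℝ) : ∃ ξ ∈ Set.uIcc s t,
    gaux j c s - gaux j c t = 2 * (j + 3 : ℕ) * ξ * (ξ ^ (j + 1) - c ^ (j + 1)) * (s - t) := by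
  have main : ∀ s t : ℝ, s < t → ∃ ξ ∈ Set.Icc s t,
    gaux j c s - gaux j c t = 2 * (j + 3 : ℕ) * ξ * (ξ ^ (j + 1) - c ^ (j + 1)) * (s - t) := by
    intro s t h
    obtain ⟨ξ, hξ, e⟩ := exists_hasDerivAt_eq_slope (gaux j c) _ h
      (fun x _ => (gaux_deriv j c x).continuousAt.continuousWithinAt) (fun x _ => gaux_deriv j c x)
    refine ⟨ξ, Set.Ioo_subset_Icc_self hξ, ?_⟩
    rw [e]
    have : t - s ≠ 0 := by linarith
    field_simp
    ring
  rcases lt_trichotomy s t with h | h | h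
  · obtain ⟨ξ, h1, h2⟩ := main s t h
    exact ⟨ξ, by rwa [Set.uIcc_of_le h.le], h2⟩
  · exact ⟨s, by simp, by simp [h]⟩
  · obtain ⟨ξ, h1, h2⟩ := main t s h
    exact ⟨ξ, by rwa [Set.uIcc_of_ge h.le], by linarith⟩

lemma gaux_upper (j : ℕ) (N c t b : ℝ) (hN : 0 < N) (hc : N ≤ c) (hc2 : c ≤ 2 * N) (ht : N ≤ t)
    (ht2 : t ≤ 2 * N) (hb : |t - c| ≤ b) :
    |gaux j c t - gaux j c c| ≤ 2 * (j + 3 : ℕ) * (j + 1 : ℕ) * (2 * N) ^ (j + 1) * b ^ 2 := by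
  obtain ⟨ξ, hξ, e⟩ := gaux_mvt j c t c
  have h1 : |ξ - c| ≤ b := by
    have := Set.abs_sub_right_of_mem_uIcc hξ
    rw [abs_sub_comm c ξ, abs_sub_comm c t] at this
    exact this.trans hb
  have hξ1 : N ≤ ξ := by
    rw [Set.mem_uIcc] at hξ; rcases hξ with h | h <;> linarith [h.1]
  have hξ2 : ξ ≤ 2 * N := by
    rw [Set.mem_uIcc] at hξ; rcases hξ with h | h <;> linarith [h.2]
  have hξ0 : 0 < ξ := by linarith
  have hc0 : 0 < c := by linarith
  have hb0 : 0 ≤ b := (abs_nonneg _).trans hb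
  have h2 : |ξ ^ (j + 1) - c ^ (j + 1)| ≤ b * (j + 1 : ℕ) * (2 * N) ^ j := by
    refine (abs_pow_sub_pow_le ξ c (j+1)).trans ?_
    rw [abs_of_pos hξ0, abs_of_pos hc0]
    simp only [Nat.add_sub_cancel]
    gcongr
    exact max_le hξ2 hc2
  rw [e, abs_mul, abs_mul, abs_of_nonneg (show 0 ≤ 2 * ((j + 3 : ℕ):ℝ) * ξ by positivity)]
  calc _ ≤ 2 * ((j + 3 : ℕ):ℝ) * (2 * N) * (b * (j + 1 : ℕ) * (2 * N) ^ j) * b := by gcongr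
    _ = _ := by ring

lemma gaux_lower (j : ℕ) (N c s t d : ℝ) (hN : 0 < N) (hd : 0 ≤ d) (hc : N ≤ c) (hs : N ≤ s) (ht : N ≤ t)
    (h : (c + d ≤ s ∧ c + d ≤ t) ∨ (s + d ≤ c ∧ t + d ≤ c)) :
    2 * (j + 3 : ℕ) * N ^ (j + 1) * (d * |s - t|) ≤ |gaux j c s - gaux j c t| := by
  obtain ⟨ξ, hξ, e⟩ := gaux_mvt j c s t
  have hξ1 : N ≤ ξ := by
    rw [Set.mem_uIcc] at hξ; rcases hξ with h | h <;> linarith [h.1]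
  have hξ0 : 0 < ξ := by linarith
  have hdc : d ≤ |ξ - c| := by
    rw [Set.mem_uIcc] at hξ
    rcases h with ⟨h1, h2⟩ | ⟨h1, h2⟩
    · refine le_trans ?_ (le_abs_self _)
      rcases hξ with h | h <;> linarith [h.1]
    · refine le_trans ?_ (neg_le_abs _)
      rcases hξ with h | h <;> linarith [h.2]
  have h3 := pow_sub_lower N ξ c hN hξ1 hc j
  rw [e, abs_mul, abs_mul, abs_of_nonneg (show 0 ≤ 2 * ((j + 3 : ℕ):ℝ) * ξ by positivity)]
  calc _ = 2 * ((j + 3 : ℕ):ℝ) * N * (N ^ j * d) * |s - t| := by ring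
    _ ≤ 2 * ((j + 3 : ℕ):ℝ) * ξ * |ξ ^ (j + 1) - c ^ (j + 1)| * |s - t| := by
      gcongr
      exact le_trans (by gcongr) h3

lemma large_scale_aux (k : ℕ) (hk : 4 ≤ k) (N b d R n n' m₁ m₂ m₃ m₄ : ℝ) (hN : 0 < N)
    (hd : 0 ≤ d) (hR : N ≤ R * b ^ 2) (n1 : N ≤ n) (n1' : N ≤ n')
    (l1 : N ≤ m₁) (l1' : m₁ ≤ 2 * N) (l2 : N ≤ m₂) (l2' : m₂ ≤ 2 * N)
    (l3 : N ≤ m₃) (l3' : m₃ ≤ 2 * N) (l4 : N ≤ m₄) (l4' : m₄ ≤ 2 * N)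
    (h2 : |m₂ - m₁| ≤ b) (h3 : |m₃ - m₁| ≤ b) (h4 : |m₄ - m₁| ≤ b)
    (hs : (m₁ + d ≤ n ∧ m₁ + d ≤ n') ∨ (n + d ≤ m₁ ∧ n' + d ≤ m₁))
    (hA : n ^ 2 - n' ^ 2 + m₁ ^ 2 + m₂ ^ 2 - m₃ ^ 2 - m₄ ^ 2 = 0)
    (hB : |n ^ k - n' ^ k + m₁ ^ k + m₂ ^ k - m₃ ^ k - m₄ ^ k| ≤ N ^ (k - 1)) :
    d * |n - n'| ≤ (R + 3 * k * 2 ^ k) * b ^ 2 := by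
  obtain ⟨j, rfl⟩ : ∃ j, k = j + 3 := ⟨k - 3, by omega⟩
  have g2 := gaux_upper j N m₁ m₂ b hN l1 l1' l2 l2' h2
  have g3 := gaux_upper j N m₁ m₃ b hN l1 l1' l3 l3' h3
  have g4 := gaux_upper j N m₁ m₄ b hN l1 l1' l4 l4' h4
  have gl := gaux_lower j N m₁ n n' d hN hd l1 n1 n1' hs
  have e : gaux j m₁ n - gaux j m₁ n' = 2 * (n ^ (j+3) - n' ^ (j+3) + m₁ ^ (j+3) + m₂ ^ (j+3) -
      m₃ ^ (j+3) - m₄ ^ (j+3)) - (gaux j m₁ m₂ - gaux j m₁ m₁) + (gaux j m₁ m₃ - gaux j m₁ m₁) +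
      (gaux j m₁ m₄ - gaux j m₁ m₁) := by
    unfold gaux
    linear_combination (-((j + 3 : ℕ):ℝ) * m₁ ^ (j + 1)) * hA
  set U := 2 * ((j + 3 : ℕ):ℝ) * (j + 1 : ℕ) * (2 * N) ^ (j + 1) * b ^ 2 with hU
  simp only [show j + 3 - 1 = j + 2 by omega] at hB
  have e2 : |gaux j m₁ n - gaux j m₁ n'| ≤ 2 * N ^ (j + 2) + 3 * U := by
    rw [e, abs_le]
    rw [abs_le] at hB g2 g3 g4
    constructor <;> linarith [hB.1, hB.2, g2.1, g2.2, g3.1, g3.2, g4.1, g4.2]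
  have e3 := gl.trans e2
  have hj3 : (0:ℝ) < (j + 3 : ℕ) := by positivity
  have e4 : 2 * ((j + 3 : ℕ):ℝ) * N ^ (j + 1) * (d * |n - n'|) ≤ 2 * ((j + 3 : ℕ):ℝ) * N ^ (j + 1) *
      (N / (j + 3 : ℕ) + 3 * (j + 1 : ℕ) * 2 ^ (j + 1) * b ^ 2) := by
    refine e3.trans (le_of_eq ?_)
    rw [hU, mul_pow]
    field_simp
    ring
  have e5 := le_of_mul_le_mul_left e4 (by positivity)
  refine e5.trans ?_
  have e6 : N / (j + 3 : ℕ) ≤ R * b ^ 2 := by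
    refine le_trans (div_le_self hN.le ?_) hR
    exact_mod_cast (by omega : 1 ≤ j + 3)
  have e7 : 3 * ((j + 1 : ℕ):ℝ) * 2 ^ (j + 1) * b ^ 2 ≤ 3 * ((j + 3 : ℕ):ℝ) * 2 ^ (j + 3) * b ^ 2 := by
    gcongr <;> first | omega | norm_num
  linarith

lemma ee_add (s t : ℝ) : ee (s + t) = ee s * ee t := by
  unfold ee
  rw [← Complex.exp_add]
  congr 1
  push_cast
  ring

lemma ee_conj (t : ℝ) : (starRingEnd ℂ) (ee t) = ee (-t) := by
  unfold ee
  rw [← Complex.exp_conj]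
  congr 1
  simp [show (starRingEnd ℂ) 2 = 2 from map_ofNat _ 2]

lemma ee_norm (t : ℝ) : ‖ee t‖ = 1 := by
  unfold ee
  rw [show 2 * (Real.pi:ℂ) * Complex.I * t = ((2 * Real.pi * t : ℝ) : ℂ) * Complex.I by push_cast; ring]
  exact Complex.norm_exp_ofReal_mul_I _

lemma ee_cont : Continuous ee := by
  unfold ee
  fun_prop

lemma ee_int (n : ℤ) : ee n = 1 := by
  unfold ee
  rw [Complex.exp_eq_one_iff]
  exact ⟨n, by push_cast; ring⟩

lemma ee_re (t : ℝ) : (ee t).re = Real.cos (2 * Real.pi * t) := by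
  unfold ee
  rw [show 2 * (Real.pi:ℂ) * Complex.I * t = ((2 * Real.pi * t : ℝ) : ℂ) * Complex.I by push_cast; ring]
  exact Complex.exp_ofReal_mul_I_re _

lemma ee_integral (n : ℤ) (hn : n ≠ 0) (a b : ℤ) (hab : a ≤ b) :
    ∫ x in Set.Icc (a:ℝ) b, ee (x * n) = 0 := by
  rw [integral_Icc_eq_integral_Ioc, ← intervalIntegral.integral_of_le (by exact_mod_cast hab)]
  have h0 : (2 * (Real.pi:ℂ) * Complex.I * n) ≠ 0 := by
    have : (Real.pi:ℂ) ≠ 0 := by exact_mod_cast Real.pi_ne_zero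
    have : (n:ℂ) ≠ 0 := by exact_mod_cast hn
    simp [*]
  have e : ∀ x : ℝ, ee (x * n) = Complex.exp ((2 * (Real.pi:ℂ) * Complex.I * n) * x) := by
    intro x
    unfold ee
    congr 1
    push_cast
    ring
  simp_rw [e]
  rw [integral_exp_mul_complex h0, ← e, ← e]
  have h1 := ee_int (b * n)
  have h2 := ee_int (a * n)
  push_cast at h1 h2
  rw [h1, h2]
  simp

/-- Fejer type weight. -/
def fW (L : ℕ) (y : ℝ) : ℝ := ‖∑ l ∈ Finset.range L, ee (y * l)‖ ^ 2 / (L:ℝ) ^ 2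

lemma fW_nonneg (L : ℕ) (y : ℝ) : 0 ≤ fW L y := by unfold fW; positivity

lemma fW_cont (L : ℕ) : Continuous (fW L) := by
  unfold fW
  have := ee_cont
  fun_prop

lemma fW_le_one (L : ℕ) (y : ℝ) : fW L y ≤ 1 := by
  unfold fW
  have : ‖∑ l ∈ Finset.range L, ee (y * l)‖ ≤ L := by
    refine (norm_sum_le _ _).trans ?_
    simp [ee_norm]
  apply div_le_one_of_le₀ _ (by positivity)
  gcongr

lemma fW_lower (L : ℕ) (hL : 1 ≤ L) (y : ℝ) (hy : 0 ≤ y) (hy2 : y ≤ 1 / (8 * L)) :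
    1 / 4 ≤ fW L y := by
  have hL0 : (0:ℝ) < L := by exact_mod_cast hL
  have h1 : (L:ℝ) / 2 ≤ ‖∑ l ∈ Finset.range L, ee (y * l)‖ := by
    refine le_trans ?_ (Complex.re_le_norm _)
    rw [Complex.re_sum]
    have : ∀ l ∈ Finset.range L, (1:ℝ)/2 ≤ (ee (y * l)).re := by
      intro l hl
      rw [ee_re, ← Real.cos_pi_div_three]
      have hl' : (l:ℝ) ≤ L := by exact_mod_cast (Finset.mem_range.1 hl).le
      have h3 : y * l ≤ 1 / 8 := by
        calc y * l ≤ 1 / (8 * L) * L := by gcongr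
          _ = 1 / 8 := by field_simp
      have hp := Real.pi_pos
      apply Real.cos_le_cos_of_nonneg_of_le_pi
      · positivity
      · linarith
      · nlinarith
    have := Finset.card_nsmul_le_sum _ _ _ this
    simp only [Finset.card_range, nsmul_eq_mul] at this
    linarith
  unfold fW
  rw [le_div_iff₀ (by positivity)]
  nlinarith

lemma fW_expand (L : ℕ) (y : ℝ) : ((fW L y : ℝ) : ℂ) =
    (∑ l ∈ Finset.range L, ∑ l' ∈ Finset.range L, ee (y * ((l:ℤ) - (l':ℤ) : ℤ))) / (L:ℂ) ^ 2 := by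
  unfold fW
  rw [Complex.ofReal_div, Complex.ofReal_pow, Complex.ofReal_pow, Complex.ofReal_natCast]
  congr 1
  rw [← Complex.mul_conj', map_sum, Finset.sum_mul_sum]
  refine Finset.sum_congr rfl fun l _ => Finset.sum_congr rfl fun l' _ => ?_
  rw [ee_conj, ← ee_add]
  congr 1
  push_cast
  ring

lemma ee_integrable (c : ℝ) (a b : ℝ) : Integrable (fun y => ee (y * c)) (volume.restrict (Set.Icc a b)) := by
  have := ee_cont
  exact (Continuous.continuousOn (by fun_prop)).integrableOn_compact isCompact_Icc

lemma fW_integral_zero (L : ℕ) (B : ℤ) (hB : (L:ℤ) ≤ |B|) :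
    ∫ y in Set.Icc (0:ℝ) 1, (fW L y : ℂ) * ee (y * B) = 0 := by
  have e : ∀ y : ℝ, (fW L y : ℂ) * ee (y * B) =
      ∑ l ∈ Finset.range L, ∑ l' ∈ Finset.range L, ee (y * (((l:ℤ) - (l':ℤ) + B : ℤ):ℝ)) / (L:ℂ) ^ 2 := by
    intro y
    rw [fW_expand, div_mul_eq_mul_div, Finset.sum_mul, Finset.sum_div]
    refine Finset.sum_congr rfl fun l _ => ?_
    rw [Finset.sum_mul, Finset.sum_div]
    refine Finset.sum_congr rfl fun l' _ => ?_
    rw [← ee_add]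
    congr 2
    push_cast
    ring
  simp_rw [e]
  rw [integral_finsetSum _ (fun l _ => integrable_finsetSum _ fun l' _ => (ee_integrable _ _ _).div_const _)]
  refine Finset.sum_eq_zero fun l hl => ?_
  rw [integral_finsetSum _ (fun l' _ => (ee_integrable _ _ _).div_const _)]
  refine Finset.sum_eq_zero fun l' hl' => ?_
  rw [integral_div]
  have hl := Finset.mem_range.1 hl
  have hl' := Finset.mem_range.1 hl'
  have h := ee_integral ((l:ℤ) - (l':ℤ) + B) (by
    intro h
    have : B = l' - l := by linarith
    rw [this] at hB
    have : |(l':ℤ) - l| < L := by rw [abs_lt]; constructor <;> omega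
    omega) 0 1 (by norm_num)
  simp only [Int.cast_zero, Int.cast_one] at h
  rw [h, zero_div]

lemma fW_integral (L : ℕ) (hL : 1 ≤ L) :
    ∫ y in Set.Icc (0:ℝ) 1, fW L y = 1 / L := by
  have hL0 : (L:ℂ) ≠ 0 := by exact_mod_cast (by omega : L ≠ 0)
  have : ((∫ y in Set.Icc (0:ℝ) 1, fW L y : ℝ) : ℂ) = 1 / L := by
    rw [← integral_complex_ofReal]
    simp_rw [fW_expand]
    rw [integral_div, integral_finsetSum _ (fun l _ => integrable_finsetSum _ fun l' _ => (ee_integrable _ _ _))]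
    have : ∀ l ∈ Finset.range L, ∫ y in Set.Icc (0:ℝ) 1, ∑ l' ∈ Finset.range L, ee (y * ((l:ℤ) - (l':ℤ) : ℤ)) = 1 := by
      intro l hl
      rw [integral_finsetSum _ (fun l' _ => (ee_integrable _ _ _))]
      rw [Finset.sum_eq_single_of_mem l hl]
      · simp [ee]
      · intro l' _ hne
        have h := ee_integral ((l:ℤ) - (l':ℤ)) (by omega) 0 1 (by norm_num)
        simpa only [Int.cast_zero, Int.cast_one] using h
    rw [Finset.sum_congr rfl this]
    simp
    field_simp
  apply Complex.ofReal_injective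
  rw [this]
  simp

/-- Weighted measure in the second variable. -/
def nuW (L : ℕ) : Measure ℝ :=
  (volume.restrict (Set.Icc (0:ℝ) 1)).withDensity (fun y => ENNReal.ofReal (fW L y))

lemma nuW_integral {E : Type*} [NormedAddCommGroup E] [NormedSpace ℝ E] (L : ℕ) (g : ℝ → E) :
    ∫ y, g y ∂(nuW L) = ∫ y in Set.Icc (0:ℝ) 1, fW L y • g y := by
  unfold nuW
  rw [integral_withDensity_eq_integral_toReal_smul]
  · refine integral_congr_ae (Filter.Eventually.of_forall fun y => ?_)
    simp only
    rw [ENNReal.toReal_ofReal (fW_nonneg L y)]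
  · exact (fW_cont L).measurable.ennreal_ofReal
  · exact Filter.Eventually.of_forall fun y => ENNReal.ofReal_lt_top

instance nuW_finite (L : ℕ) : IsFiniteMeasure (nuW L) := by
  unfold nuW
  apply isFiniteMeasure_withDensity_ofReal
  exact ((fW_cont L).continuousOn.integrableOn_compact isCompact_Icc).2

lemma nuW_real (L : ℕ) (hL : 1 ≤ L) : (nuW L).real Set.univ = 1 / L := by
  have h := nuW_integral L (fun _ => (1:ℝ))
  simp only [integral_const, smul_eq_mul, mul_one] at h
  rw [h, fW_integral L hL]

/-- The weighted measure on the plane. -/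
def muW (L : ℕ) : Measure (ℝ × ℝ) := (volume.restrict (Set.Icc (-1:ℝ) 1)).prod (nuW L)

instance muW_finite (L : ℕ) : IsFiniteMeasure (muW L) := by
  unfold muW
  infer_instance

lemma muW_real (L : ℕ) (hL : 1 ≤ L) : (muW L).real Set.univ = 2 / L := by
  unfold muW
  rw [← Set.univ_prod_univ, measureReal_prod_prod, nuW_real L hL]
  simp
  norm_num
  ring

/-- The family of characters. -/
def fam (N k : ℕ) (y0 : ℝ) (n : ℕ) (z : ℝ × ℝ) : ℂ :=
  if N ≤ n ∧ n ≤ 2 * N then ee (z.1 * (n:ℝ) ^ 2 + (y0 + z.2) * (n:ℝ) ^ k) else 0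

lemma fam_meas (N k : ℕ) (y0 : ℝ) (n : ℕ) : Measurable (fam N k y0 n) := by
  unfold fam
  have := ee_cont
  split_ifs
  · exact Continuous.measurable (by fun_prop)
  · exact measurable_const

lemma fam_norm (N k : ℕ) (y0 : ℝ) (n : ℕ) (z : ℝ × ℝ) : ‖fam N k y0 n z‖ ≤ 1 := by
  unfold fam
  split_ifs
  · rw [ee_norm]
  · simp

lemma fam_orth (N k L : ℕ) (y0 : ℝ) (n n' m₁ m₂ m₃ m₄ : ℕ)
    (h : N ≤ n → n ≤ 2 * N → N ≤ n' → n' ≤ 2 * N → N ≤ m₁ → m₁ ≤ 2 * N → N ≤ m₂ → m₂ ≤ 2 * N →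
      N ≤ m₃ → m₃ ≤ 2 * N → N ≤ m₄ → m₄ ≤ 2 * N →
      (n:ℤ) ^ 2 - (n':ℤ) ^ 2 + (m₁:ℤ) ^ 2 + (m₂:ℤ) ^ 2 - (m₃:ℤ) ^ 2 - (m₄:ℤ) ^ 2 = 0 →
      |(n:ℤ) ^ k - (n':ℤ) ^ k + (m₁:ℤ) ^ k + (m₂:ℤ) ^ k - (m₃:ℤ) ^ k - (m₄:ℤ) ^ k| < L → False) :
    ∫ x, fam N k y0 n x * (starRingEnd ℂ) (fam N k y0 n' x) * (fam N k y0 m₁ x * fam N k y0 m₂ x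
      * (starRingEnd ℂ) (fam N k y0 m₃ x) * (starRingEnd ℂ) (fam N k y0 m₄ x)) ∂(muW L) = 0 := by
  by_cases c : (N ≤ n ∧ n ≤ 2 * N) ∧ (N ≤ n' ∧ n' ≤ 2 * N) ∧ (N ≤ m₁ ∧ m₁ ≤ 2 * N) ∧
      (N ≤ m₂ ∧ m₂ ≤ 2 * N) ∧ (N ≤ m₃ ∧ m₃ ≤ 2 * N) ∧ (N ≤ m₄ ∧ m₄ ≤ 2 * N)
  swap
  · have : ∀ x, fam N k y0 n x * (starRingEnd ℂ) (fam N k y0 n' x) * (fam N k y0 m₁ x *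
      fam N k y0 m₂ x * (starRingEnd ℂ) (fam N k y0 m₃ x) * (starRingEnd ℂ) (fam N k y0 m₄ x)) = 0 := by
      intro x
      simp only [fam]
      by_cases c1 : N ≤ n ∧ n ≤ 2 * N
      swap
      · rw [if_neg c1]; simp
      by_cases c2 : N ≤ n' ∧ n' ≤ 2 * N
      swap
      · rw [if_neg c2]; simp
      by_cases c3 : N ≤ m₁ ∧ m₁ ≤ 2 * N
      swap
      · rw [if_neg c3]; simp
      by_cases c4 : N ≤ m₂ ∧ m₂ ≤ 2 * N
      swap
      · rw [if_neg c4]; simp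
      by_cases c5 : N ≤ m₃ ∧ m₃ ≤ 2 * N
      swap
      · rw [if_neg c5]; simp
      rw [if_neg (fun c6 => c ⟨c1, c2, c3, c4, c5, c6⟩ : ¬ (N ≤ m₄ ∧ m₄ ≤ 2 * N))]
      simp
    simp_rw [this]
    simp
  obtain ⟨c1, c2, c3, c4, c5, c6⟩ := c
  specialize h c1.1 c1.2 c2.1 c2.2 c3.1 c3.2 c4.1 c4.2 c5.1 c5.2 c6.1 c6.2
  obtain ⟨A, hA⟩ : ∃ A : ℤ, A = (n:ℤ) ^ 2 - (n':ℤ) ^ 2 + (m₁:ℤ) ^ 2 + (m₂:ℤ) ^ 2 - (m₃:ℤ) ^ 2 - (m₄:ℤ) ^ 2 := ⟨_, rfl⟩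
  obtain ⟨B, hB⟩ : ∃ B : ℤ, B = (n:ℤ) ^ k - (n':ℤ) ^ k + (m₁:ℤ) ^ k + (m₂:ℤ) ^ k - (m₃:ℤ) ^ k - (m₄:ℤ) ^ k := ⟨_, rfl⟩
  rw [← hA, ← hB] at h
  have e : ∀ x : ℝ × ℝ, fam N k y0 n x * (starRingEnd ℂ) (fam N k y0 n' x) * (fam N k y0 m₁ x *
      fam N k y0 m₂ x * (starRingEnd ℂ) (fam N k y0 m₃ x) * (starRingEnd ℂ) (fam N k y0 m₄ x)) =
      ee (x.1 * A) * (ee (y0 * B) * ee (x.2 * B)) := by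
    intro x
    simp only [fam, if_pos c1, if_pos c2, if_pos c3, if_pos c4, if_pos c5, if_pos c6, ee_conj,
      ← ee_add]
    congr 1
    rw [hA, hB]
    push_cast
    ring
  simp_rw [e]
  unfold muW
  rw [integral_prod_mul (f := fun x => ee (x * A)) (g := fun y => ee (y0 * B) * ee (y * B))]
  by_cases hA0 : A = 0
  · rw [integral_const_mul, nuW_integral]
    simp only [Complex.real_smul]
    rw [fW_integral_zero L B (by by_contra hh; exact h hA0 (by omega))]
    simp
  · have h1 := ee_integral A hA0 (-1) 1 (by norm_num)
    simp only [Int.cast_neg, Int.cast_one] at h1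
    rw [h1, zero_mul]

lemma sep_small (N k L Hm : ℕ) (y0 : ℝ) (hN : 1 ≤ N) (hH : 3 * ((Hm:ℤ) - 1) ^ 2 < 2 * N) :
    SepOrth (muW L) (fam N k y0) 1 Hm 1 := by
  intro b d n n' m₁ m₂ m₃ m₄ hb hbH hd h2 h2' h3 h3' h4 h4' hs k1 k1' k2 k2' hlt
  apply fam_orth
  intro _ _ _ _ l1 _ _ _ _ _ _ _ hA _
  have := small_scale_aux N Hm b d n n' m₁ m₂ m₃ m₄ (by omega) (by omega) (by omega) hH (by omega)
    (by omega) (by omega) (by omega) (by omega) (by omega) (by omega) (by omega) (by omega)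
    (by omega) (by omega) (by omega) hA
  have h' : (d:ℝ) * |(n:ℝ) - n'| ≤ (b:ℝ) ^ 2 := by exact_mod_cast this
  linarith

lemma sep_large (N k M Hm : ℕ) (hk : 4 ≤ k) (R y0 : ℝ) (hN : 1 ≤ N) (hR0 : 0 ≤ R)
    (hR : (N:ℝ) ≤ R * (M:ℝ) ^ 2) :
    SepOrth (muW (N ^ (k - 1))) (fam N k y0) M Hm (R + 3 * k * 2 ^ k) := by
  intro b d n n' m₁ m₂ m₃ m₄ hb hbH hd h2 h2' h3 h3' h4 h4' hs k1 k1' k2 k2' hlt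
  apply fam_orth
  intro l1 l1' l2 l2' l3 l3' l4 l4' l5 l5' l6 l6' hA hB
  have cast : ∀ p q : ℕ, p ≤ q → (p:ℝ) ≤ q := fun p q h => by exact_mod_cast h
  have cast2 : ∀ p : ℕ, p ≤ 2 * N → (p:ℝ) ≤ 2 * N := fun p h => by exact_mod_cast h
  have cabs : ∀ p q : ℕ, p < q + b → q < p + b → |(p:ℝ) - q| ≤ b := fun p q h h' => by
    have h1 : (p:ℝ) < q + b := by exact_mod_cast h
    have h2 : (q:ℝ) < p + b := by exact_mod_cast h'
    rw [abs_le]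
    constructor <;> linarith
  have := large_scale_aux k hk N b d R n n' m₁ m₂ m₃ m₄ (by exact_mod_cast hN) (by positivity)
    (hR.trans (by gcongr)) (cast _ _ l1) (cast _ _ l2) (cast _ _ l3) (cast2 _ l3')
    (cast _ _ l4) (cast2 _ l4') (cast _ _ l5) (cast2 _ l5') (cast _ _ l6) (cast2 _ l6')
    (cabs _ _ h2 h2') (cabs _ _ h3 h3') (cabs _ _ h4 h4')
    (by exact_mod_cast hs) (by exact_mod_cast hA) (by exact_mod_cast hB.le)
  linarith

lemma u_facts (r m : ℕ) (η : ℝ) (hr : 1 ≤ r) (hη : 0 < η) (hm : 26 / η ≤ m) :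
    1 ≤ (r:ℝ) ^ (η / 2) ∧ (r:ℝ) ^ 13 ≤ ((r:ℝ) ^ (η / 2)) ^ m ∧
    ∀ p : ℕ, ((r:ℝ) ^ (η / 2)) ^ (2 * p) = ((r ^ p : ℕ) : ℝ) ^ η := by
  have hr1 : (1:ℝ) ≤ r := by exact_mod_cast hr
  have hr0 : (0:ℝ) ≤ r := by linarith
  refine ⟨Real.one_le_rpow hr1 (by positivity), ?_, ?_⟩
  · rw [← Real.rpow_mul_natCast hr0, ← Real.rpow_natCast (r:ℝ) 13]
    apply Real.rpow_le_rpow_of_exponent_le hr1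
    rw [div_le_iff₀ hη] at hm
    push_cast
    linarith
  · intro p
    rw [← Real.rpow_mul_natCast hr0]
    push_cast
    rw [← Real.rpow_natCast (r:ℝ) p, ← Real.rpow_mul hr0]
    congr 1
    ring

lemma app_one (η : ℝ) (hη : 0 < η) : ∃ K > (0:ℝ), ∀ N : ℕ, 1 ≤ N → ∀ (k L : ℕ) (y0 : ℝ), 1 ≤ L →
    ∃ M : ℕ, 1 ≤ M ∧ M ≤ N ∧ N ≤ 160 ^ 4 * M ^ 2 ∧
      ∀ a, ∫ z, ‖blockSum (fam N k y0) a M z‖ ^ 6 ∂(muW L) ≤ K * (2 / L) * (M:ℝ) ^ 3 * (N:ℝ) ^ η := by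
  obtain ⟨m, hm⟩ := exists_nat_ge (26 / η)
  obtain ⟨u1, u2, u3⟩ := u_facts 160 m η (by norm_num) hη hm
  refine ⟨(160:ℝ) ^ (3 * 2 ^ m), by positivity, ?_⟩
  intro N hN k L y0 hL
  have hex : ∃ P : ℕ, 160 ^ P ≤ N ∧ N ≤ 160 ^ 4 * (160 ^ P) ^ 2 ∧ 3 * (((160 ^ P : ℕ):ℤ) - 1) ^ 2 < 2 * N := by
    have h1 := Nat.pow_log_le_self 25600 (show N ≠ 0 by omega)
    have h2 := Nat.lt_pow_succ_log_self (show 1 < 25600 by norm_num) N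
    obtain ⟨q, hq⟩ : ∃ q, q = Nat.log 25600 N := ⟨_, rfl⟩
    rw [← hq] at h1 h2
    have e : ∀ P, 25600 ^ P = (160 ^ P) ^ 2 := fun P => by
      rw [← pow_mul, mul_comm, pow_mul]
      norm_num
    rcases q with _ | P
    · refine ⟨0, by simpa using hN, ?_, ?_⟩
      · norm_num at h2 ⊢
        omega
      · simp
        omega
    · have hp : 1 ≤ 160 ^ P := Nat.one_le_pow _ _ (by norm_num)
      rw [pow_succ, e] at h1
      rw [pow_succ, pow_succ, e] at h2
      refine ⟨P, by nlinarith, by omega, ?_⟩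
      have h1' : (((160 ^ P : ℕ):ℤ)) ^ 2 * 25600 ≤ N := by exact_mod_cast h1
      have hp' : (1:ℤ) ≤ ((160 ^ P : ℕ):ℤ) := by exact_mod_cast hp
      nlinarith
  obtain ⟨P, p1, p2, p3⟩ := hex
  refine ⟨160 ^ P, Nat.one_le_pow _ _ (by norm_num), p1, p2, ?_⟩
  intro a
  have hV : ∀ a, ∫ z, ‖blockSum (fam N k y0) a 1 z‖ ^ 6 ∂(muW L) ≤ 2 / L := by
    intro a
    have : ∀ z, ‖blockSum (fam N k y0) a 1 z‖ ^ 6 ≤ 1 := fun z => by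
      apply pow_le_one₀ (norm_nonneg _)
      simpa using blockSum_norm_le (fam N k y0) (fam_norm N k y0) a 1 z
    have h := integral_mono_of_nonneg (μ := muW L) (Filter.Eventually.of_forall fun z => by positivity)
      (integrable_const (1:ℝ)) (Filter.Eventually.of_forall this)
    refine h.trans ?_
    rw [integral_const, muW_real L hL]
    simp
  have := abstract_sixth (muW L) (fam N k y0) (fam_meas N k y0) (fam_norm N k y0) 1 (160 ^ P) 160 m 1
    _ _ le_rfl (by norm_num) (by norm_num) u1 u2 (sep_small N k L (160 ^ P) y0 hN p3) hV P (by simp) a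
  rw [one_mul, u3] at this
  refine this.trans ?_
  have hl : (((160 ^ P : ℕ):ℝ)) ^ η ≤ (N:ℝ) ^ η := by
    apply Real.rpow_le_rpow (by positivity) (by exact_mod_cast p1) hη.le
  simp only [Nat.cast_one, one_pow, div_one, Nat.cast_ofNat]
  gcongr

lemma blockSum_fam (N k H : ℕ) (y0 : ℝ) (hH : N < H) (z : ℝ × ℝ) :
    blockSum (fam N k y0) N H z =
      ∑ n ∈ Finset.Icc N (2 * N), ee (z.1 * (n:ℝ) ^ 2 + (y0 + z.2) * (n:ℝ) ^ k) := by
  unfold blockSum fam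
  have h := Finset.sum_Ico_eq_sum_range (fun n => if N ≤ n ∧ n ≤ 2 * N then
    ee (z.1 * (n:ℝ) ^ 2 + (y0 + z.2) * (n:ℝ) ^ k) else 0) N (N + H)
  rw [Nat.add_sub_cancel_left] at h
  rw [← h, ← Finset.sum_filter]
  apply Finset.sum_congr _ fun _ _ => rfl
  ext n
  simp only [Finset.mem_filter, Finset.mem_Ico, Finset.mem_Icc]
  omega

lemma app_two (k : ℕ) (hk : 4 ≤ k) (η : ℝ) (hη : 0 < η) : ∃ K > (0:ℝ), ∀ N : ℕ, 1 ≤ N → ∀ y0 : ℝ,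
    ∫ z, ‖∑ n ∈ Finset.Icc N (2 * N), ee (z.1 * (n:ℝ) ^ 2 + (y0 + z.2) * (n:ℝ) ^ k)‖ ^ 6
      ∂(muW (N ^ (k - 1))) ≤ K * (N:ℝ) ^ (3 + 2 * η) / ((N ^ (k - 1) : ℕ) : ℝ) := by
  obtain ⟨K, hK, h1⟩ := app_one η hη
  obtain ⟨m, hm⟩ := exists_nat_ge (26 / η)
  obtain ⟨r, hr1, hr2⟩ : ∃ r : ℕ, 160 ≤ r ∧ ((160:ℝ) ^ 4 + 3 * k * 2 ^ k) ≤ r :=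
    ⟨max 160 ⌈(160:ℝ) ^ 4 + 3 * k * 2 ^ k⌉₊, le_max_left _ _,
      (Nat.le_ceil _).trans (by exact_mod_cast le_max_right _ _)⟩
  obtain ⟨u1, u2, u3⟩ := u_facts r m η (by omega) hη hm
  have hr0 : (0:ℝ) < r := by exact_mod_cast (by omega : 0 < r)
  refine ⟨(r:ℝ) ^ (3 * 2 ^ m) * K * 2 * (r:ℝ) ^ 3 * (r:ℝ) ^ η, by positivity, ?_⟩
  intro N hN y0
  have hL : 1 ≤ N ^ (k - 1) := Nat.one_le_pow _ _ hN
  obtain ⟨M, M1, M2, M3, hV⟩ := h1 N hN k (N ^ (k - 1)) y0 hL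
  have hex : ∃ p, N < M * r ^ p ∧ M * r ^ p ≤ r * N := by
    have hNM : N / M ≠ 0 := by
      have := Nat.div_pos M2 M1
      omega
    have g1 := Nat.pow_log_le_self r hNM
    have g2 := Nat.lt_pow_succ_log_self (show 1 < r by omega) (N / M)
    refine ⟨Nat.log r (N / M) + 1, ?_, ?_⟩
    · rw [Nat.div_lt_iff_lt_mul M1] at g2
      rwa [mul_comm]
    · rw [Nat.le_div_iff_mul_le M1] at g1
      rw [pow_succ]
      calc M * (r ^ Nat.log r (N / M) * r) = r * (r ^ Nat.log r (N / M) * M) := by ring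
        _ ≤ r * N := by gcongr
  obtain ⟨p, p1, p2⟩ := hex
  have hs := sep_large N k M (M * r ^ p) hk (160 ^ 4) y0 hN (by norm_num) (by exact_mod_cast M3)
  have := abstract_sixth (muW (N ^ (k - 1))) (fam N k y0) (fam_meas N k y0) (fam_norm N k y0) M
    (M * r ^ p) r m _ _ _ M1 hr1 hr2 u1 u2 hs hV p le_rfl N
  simp_rw [blockSum_fam N k _ y0 p1] at this
  refine this.trans ?_
  rw [u3]
  have hN0 : (0:ℝ) < N := by exact_mod_cast hN
  have hM0 : (0:ℝ) < M := by exact_mod_cast M1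
  have q1 : ((M * r ^ p : ℕ):ℝ) ≤ r * N := by exact_mod_cast p2
  have q2 : ((r ^ p : ℕ):ℝ) ≤ r * N := by
    refine le_trans ?_ q1
    exact_mod_cast Nat.le_mul_of_pos_left _ M1
  have hL0 : (0:ℝ) < ((N ^ (k - 1) : ℕ) : ℝ) := by exact_mod_cast hL
  generalize ((N ^ (k - 1) : ℕ) : ℝ) = L at *
  have hn : (N:ℝ) ^ (3 + 2 * η) = (N:ℝ) ^ 3 * ((N:ℝ) ^ η * (N:ℝ) ^ η) := by
    rw [Real.rpow_add hN0, two_mul, Real.rpow_add hN0]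
    norm_cast
  calc _ ≤ ((r:ℝ) ^ (3 * 2 ^ m) * (K * (2 / L) * (M:ℝ) ^ 3 * (N:ℝ) ^ η) / (M:ℝ) ^ 3) *
        (r * N) ^ 3 * (r * N) ^ η := by gcongr
    _ = _ := by
      rw [hn, Real.mul_rpow hr0.le hN0.le]
      field_simp

lemma window_bound (L : ℕ) (hL : 1 ≤ L) (G : ℝ × ℝ → ℝ) (hG : Continuous G) (h0 : ∀ z, 0 ≤ G z)
    (D : ℝ) (hD : ∀ z, G z ≤ D) :
    ∫ x in Set.Icc (-1:ℝ) 1, ∫ y in Set.Icc (0:ℝ) (1 / (8 * L)), G (x, y) ≤ 4 * ∫ z, G z ∂(muW L) := by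
  have hL1 : (1:ℝ) ≤ L := by exact_mod_cast hL
  have hi : Integrable G (muW L) := by
    refine Integrable.of_bound hG.aestronglyMeasurable D (Filter.Eventually.of_forall fun z => ?_)
    rw [Real.norm_of_nonneg (h0 z)]
    exact hD z
  unfold muW at hi ⊢
  rw [integral_prod _ hi, ← integral_const_mul]
  apply integral_mono_of_nonneg
  · exact Filter.Eventually.of_forall fun x => integral_nonneg fun y => h0 _
  · exact hi.integral_prod_left.const_mul 4
  · refine Filter.Eventually.of_forall fun x => ?_
    simp only
    rw [nuW_integral, ← integral_const_mul]
    have c1 : Continuous (fun y => 4 * (fW L y • G (x, y))) := by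
      have := fW_cont L
      fun_prop
    have c2 : Continuous (fun y => G (x, y)) := by fun_prop
    calc ∫ y in Set.Icc (0:ℝ) (1 / (8 * L)), G (x, y)
        ≤ ∫ y in Set.Icc (0:ℝ) (1 / (8 * L)), 4 * (fW L y • G (x, y)) := by
          apply setIntegral_mono_on (c2.continuousOn.integrableOn_compact isCompact_Icc)
            (c1.continuousOn.integrableOn_compact isCompact_Icc) measurableSet_Icc
          intro y hy
          have := fW_lower L hL y hy.1 hy.2
          have h0' := h0 (x, y)
          rw [smul_eq_mul]
          nlinarith
      _ ≤ _ := by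
          apply setIntegral_mono_set (c1.continuousOn.integrableOn_compact isCompact_Icc)
          · refine Filter.Eventually.of_forall fun y => ?_
            have := fW_nonneg L y
            have h0' := h0 (x, y)
            simp only [smul_eq_mul, Pi.zero_apply]
            positivity
          · apply Filter.Eventually.of_forall
            apply Set.Icc_subset_Icc_right
            rw [div_le_one (by positivity)]
            linarith

lemma split_bound (g : ℝ → ℝ) (hg : Continuous g) (h0 : ∀ y, 0 ≤ g y) (lam h : ℝ) (J : ℕ)
    (hh : 0 ≤ h) (hJ : lam ≤ J * h) :
    ∫ y in Set.Icc (0:ℝ) lam, g y ≤ ∑ j ∈ Finset.range J, ∫ y in Set.Icc (0:ℝ) h, g (j * h + y) := by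
  have e : ∀ j : ℕ, ∫ y in Set.Icc (0:ℝ) h, g (j * h + y) = ∫ y in (j * h : ℝ)..((j + 1 : ℕ) * h : ℝ), g y := by
    intro j
    rw [integral_Icc_eq_integral_Ioc, ← intervalIntegral.integral_of_le hh,
      intervalIntegral.integral_comp_add_left]
    congr 1
    · ring
    · push_cast; ring
  simp_rw [e]
  rw [intervalIntegral.sum_integral_adjacent_intervals (a := fun j : ℕ => (j * h : ℝ))
    (fun j _ => hg.intervalIntegrable _ _)]
  simp only [Nat.cast_zero, zero_mul]
  rw [intervalIntegral.integral_of_le (by positivity), ← integral_Icc_eq_integral_Ioc]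
  apply setIntegral_mono_set (hg.continuousOn.integrableOn_compact isCompact_Icc)
  · exact Filter.Eventually.of_forall fun y => h0 y
  · exact Filter.Eventually.of_forall (Set.Icc_subset_Icc_right hJ)

theorem sixth_moment_mixed_weyl_sum (k : ℕ) (hk : 4 ≤ k) :
    ∀ ε > (0 : ℝ), ∃ C > (0 : ℝ), ∀ N : ℕ, 1 ≤ N → ∀ lam : ℝ, 0 ≤ lam → lam ≤ 1 →
      (∫ x in Set.Icc (-1 : ℝ) 1, ∫ y in Set.Icc (0 : ℝ) lam,
          ‖∑ n ∈ Finset.Icc N (2 * N), ee (x * (n : ℝ) ^ 2 + y * (n : ℝ) ^ k)‖ ^ (6 : ℕ)) ≤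
        C * (lam * (N : ℝ) ^ ((3 : ℝ) + ε) + (N : ℝ) ^ ((4 : ℝ) - (k : ℝ) + ε)) := by
  intro ε hε
  obtain ⟨K, hK, hmain⟩ := app_two k hk (ε / 2) (by positivity)
  refine ⟨32 * K, by positivity, ?_⟩
  intro N hN lam hl0 hl1
  have hL : 1 ≤ N ^ (k - 1) := Nat.one_le_pow _ _ hN
  have hN0 : (0:ℝ) < N := by exact_mod_cast hN
  specialize hmain N hN
  have hLr : ((N ^ (k - 1) : ℕ) : ℝ) = (N:ℝ) ^ ((k:ℝ) - 1) := by
    push_cast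
    rw [← Real.rpow_natCast, Nat.cast_sub (by omega)]
    simp
  obtain ⟨L, hLdef⟩ : ∃ L, L = N ^ (k - 1) := ⟨_, rfl⟩
  rw [← hLdef] at hL hLr hmain
  rw [show 3 + 2 * (ε / 2) = 3 + ε by ring] at hmain
  have hL0 : (0:ℝ) < L := by exact_mod_cast hL
  obtain ⟨h, hh⟩ : ∃ h : ℝ, h = 1 / (8 * L) := ⟨_, rfl⟩
  have hhp : 0 < h := by rw [hh]; positivity
  let S : ℝ × ℝ → ℝ := fun z =>
    ‖∑ n ∈ Finset.Icc N (2 * N), ee (z.1 * (n : ℝ) ^ 2 + z.2 * (n : ℝ) ^ k)‖ ^ (6 : ℕ)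
  have hS : Continuous S := by
    have := ee_cont
    simp only [S]
    fun_prop
  have hS0 : ∀ z, 0 ≤ S z := fun z => by positivity
  have hSD : ∀ z, S z ≤ ((Finset.Icc N (2 * N)).card : ℝ) ^ 6 := by
    intro z
    simp only [S]
    gcongr
    refine (norm_sum_le _ _).trans ?_
    simp [ee_norm]
  have hw : ∀ y0 : ℝ, ∫ x in Set.Icc (-1:ℝ) 1, ∫ y in Set.Icc (0:ℝ) h, S (x, y0 + y) ≤
      4 * (K * (N:ℝ) ^ (3 + ε) / L) := by
    intro y0
    have := window_bound L hL (fun z => S (z.1, y0 + z.2)) (by fun_prop) (fun z => hS0 _) _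
      (fun z => hSD _)
    rw [← hh] at this
    refine this.trans ?_
    have := hmain y0
    gcongr
  have hJ := Nat.le_ceil (lam / h)
  have hJ2 := (Nat.ceil_lt_add_one (div_nonneg hl0 hhp.le)).le
  obtain ⟨J, hJd⟩ : ∃ J, J = ⌈lam / h⌉₊ := ⟨_, rfl⟩
  rw [← hJd] at hJ hJ2
  rw [div_le_iff₀ hhp] at hJ
  have hInteg : ∀ (y0 b : ℝ), Integrable (fun x => ∫ y in Set.Icc (0:ℝ) b, S (x, y0 + y))
      (volume.restrict (Set.Icc (-1:ℝ) 1)) := by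
    intro y0 b
    have hi : Integrable (fun z : ℝ × ℝ => S (z.1, y0 + z.2))
        ((volume.restrict (Set.Icc (-1:ℝ) 1)).prod (volume.restrict (Set.Icc (0:ℝ) b))) := by
      refine Integrable.of_bound (Continuous.aestronglyMeasurable (by fun_prop))
        (((Finset.Icc N (2 * N)).card : ℝ) ^ 6) (Filter.Eventually.of_forall fun z => ?_)
      rw [Real.norm_of_nonneg (hS0 _)]
      exact hSD _
    exact hi.integral_prod_left
  have step : ∫ x in Set.Icc (-1 : ℝ) 1, ∫ y in Set.Icc (0 : ℝ) lam, S (x, y) ≤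
      J * (4 * (K * (N:ℝ) ^ (3 + ε) / L)) := by
    calc ∫ x in Set.Icc (-1 : ℝ) 1, ∫ y in Set.Icc (0 : ℝ) lam, S (x, y)
        ≤ ∫ x in Set.Icc (-1 : ℝ) 1, ∑ j ∈ Finset.range J, ∫ y in Set.Icc (0:ℝ) h, S (x, j * h + y) := by
          apply integral_mono_of_nonneg
          · exact Filter.Eventually.of_forall fun x => integral_nonneg fun y => hS0 _
          · exact integrable_finsetSum _ fun j _ => hInteg _ _
          · exact Filter.Eventually.of_forall fun x =>
              split_bound (fun y => S (x, y)) (by fun_prop) (fun y => hS0 _) lam h J hhp.le hJ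
      _ = ∑ j ∈ Finset.range J, ∫ x in Set.Icc (-1 : ℝ) 1, ∫ y in Set.Icc (0:ℝ) h, S (x, j * h + y) :=
          integral_finsetSum _ fun j _ => hInteg _ _
      _ ≤ ∑ j ∈ Finset.range J, 4 * (K * (N:ℝ) ^ (3 + ε) / L) :=
          Finset.sum_le_sum fun j _ => hw _
      _ = _ := by simp
  refine step.trans ?_
  have e4 : (N : ℝ) ^ ((4 : ℝ) - (k : ℝ) + ε) = (N:ℝ) ^ (3 + ε) / L := by
    rw [hLr, ← Real.rpow_sub hN0]
    congr 1
    ring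
  rw [e4]
  have hX : 0 ≤ (N:ℝ) ^ (3 + ε) := by positivity
  calc (J:ℝ) * (4 * (K * (N:ℝ) ^ (3 + ε) / L)) ≤ (lam / h + 1) * (4 * (K * (N:ℝ) ^ (3 + ε) / L)) := by
        gcongr
    _ = 32 * K * (lam * (N:ℝ) ^ (3 + ε)) + 4 * K * ((N:ℝ) ^ (3 + ε) / L) := by
        rw [hh]
        field_simp
        ring
    _ ≤ 32 * K * (lam * (N:ℝ) ^ (3 + ε)) + 32 * K * ((N:ℝ) ^ (3 + ε) / L) := by
        gcongr
        norm_num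
    _ = _ := by ring

end
end
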